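/- Let k ≥ 2 and let 𝒜 = {A_1, …, A_n} be subsets of ℝ² with f_{k+1}(𝒜) = 0 and such that for every σ with |σ| ∈ {k, k+1} the set A_σ is empty, a single point, or both open and path-connected. For every σ ⊆ {1, …, n} with |σ| = k+1 and A_σ ≠ ∅ choose a point a_σ ∈ A_σ (these points are pairwise distinct since f_{k+1}(𝒜) = 0); let W be the set of all chosen points and, for each k-element τ ⊆ {1, …, n}, let V_τ = {a_σ : σ ⊃ τ, |σ| = k+1, A_σ ≠ ∅}. Then one can choose, for every k-element τ with V_τ ≠ ∅, a tree G_τ with vertex set V_τ together with a drawing of G_τ whose image is contained in A_τ, such that the graph G with vertex set W whose edge set is the union of the edge sets of all the trees G_τ is a simple graph, and the union of these drawings is a crossing-free drawing of G inside ⋃𝒜; in particular G is a simple planar graph. -/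

import Mathlib

/-- `NerveTop A k` is the set of index sets `σ` with `|σ| = k+1` and `⋂ i ∈ σ, A i ≠ ∅`,
i.e. the `k`-dimensional faces of the nerve of `𝒜`. -/
abbrev NerveTop {α : Type*} {n : ℕ} (A : Fin n → Set α) (k : ℕ) : Type _ :=
  {σ : Finset (Fin n) // σ.card = k + 1 ∧ (⋂ i ∈ σ, A i).Nonempty}

/-- `fNum A k` is `f_k(𝒜)`: the number of subsets `σ` of the index set with
`|σ| = k+1` such that `⋂ i ∈ σ, A i` is nonempty. -/
noncomputable def fNum {α : Type*} {n : ℕ} (A : Fin n → Set α) (k : ℕ) : ℕ :=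
  Nat.card (NerveTop A k)

/-!
Each region `A_τ` with at least two marked points `a_σ` is open and path-connected, so it contains a
simple arc through all of them: start from a segment and drag its points around by homeomorphisms
supported in `A_τ`. Since no `k + 2` sets meet, two of these arcs can only meet inside some `A_σ`
with `|σ| = k + 1`, and these cells `A_σ` are pairwise disjoint. Swallow all the crossings inside
`A_σ`, together with `a_σ`, by a compact connected core `C_σ ⊆ A_σ`, and thicken the cores a little:
outside the thickenings the arcs are disjoint. The gaps of the arc in `A_τ` between consecutive
visits to thickenings link up the cells `σ ⊃ τ`, so some of them form a spanning tree; within each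
thickening the ends of the selected gaps are joined to `a_σ` by arcs that share nothing but `a_σ`.
A generic thickening radius keeps distinct gaps from sharing an endpoint.
-/

open Set Topology Filter

section Drag

variable {E : Type*} [NormedAddCommGroup E] [NormedSpace ℝ E] [CompleteSpace E]

theorem exists_homeomorph_eq_add_of_lipschitzWith {f : E → E} {K : NNReal} (hf : LipschitzWith K f)
    (hK : K < 1) : ∃ h : E ≃ₜ E, ∀ x, h x = x + f x := by
  have happrox : ApproximatesLinearOn (fun x ↦ x + f x)
      (ContinuousLinearEquiv.refl ℝ E : E →L[ℝ] E) univ K := fun x _ y _ ↦ by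
    simpa [add_sub_add_comm] using hf.norm_sub_le x y
  rcases subsingleton_or_nontrivial E with hE | hE
  · exact ⟨happrox.toHomeomorph _ (.inl hE), fun _ ↦ rfl⟩
  · refine ⟨happrox.toHomeomorph _ (.inr ?_), fun _ ↦ rfl⟩
    have hnorm : ‖((ContinuousLinearEquiv.refl ℝ E).symm : E →L[ℝ] E)‖₊ = 1 :=
      ContinuousLinearMap.nnnorm_id (𝕜 := ℝ) (E := E)
    rwa [hnorm, inv_one]

theorem exists_homeomorph_of_mem_ball {c q : E} {r : ℝ} (hq : q ∈ Metric.ball c r) :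
    ∃ h : E ≃ₜ E, h c = q ∧ EqOn h id (Metric.ball c r)ᶜ := by
  have hr : 0 < r := Metric.pos_of_mem_ball hq
  have hbump : LipschitzWith (r⁻¹).toNNReal fun x ↦ max 0 (1 - dist x c / r) := by
    refine LipschitzWith.const_max ?_ 0
    refine LipschitzWith.of_dist_le_mul fun x y ↦ ?_
    have hdiff : 1 - dist x c / r - (1 - dist y c / r) = r⁻¹ * (dist y c - dist x c) := by ring
    rw [Real.dist_eq, hdiff, abs_mul, abs_of_pos (inv_pos.2 hr),
      Real.coe_toNNReal _ (by positivity), dist_comm x y]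
    gcongr
    exact abs_dist_sub_le y x c
  obtain ⟨h, hh⟩ := exists_homeomorph_eq_add_of_lipschitzWith
    (f := fun x ↦ max 0 (1 - dist x c / r) • (q - c)) (K := (dist q c / r).toNNReal)
    (LipschitzWith.of_dist_le_mul fun x y ↦ by
      have := hbump.dist_le_mul x y
      rw [Real.coe_toNNReal _ (by positivity)] at this ⊢
      rw [dist_eq_norm, ← sub_smul, norm_smul, Real.norm_eq_abs, ← Real.dist_eq, ← dist_eq_norm]
      calc _ ≤ r⁻¹ * dist x y * dist q c := by gcongr
        _ = _ := by ring)
    (by rw [Real.toNNReal_lt_one, div_lt_one hr]; exact hq)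
  refine ⟨h, by simp [hh], fun x hx ↦ ?_⟩
  have hx' : 1 - dist x c / r ≤ 0 := by
    rw [sub_nonpos, one_le_div hr]
    simpa using hx
  simp [hh, max_eq_left hx']

theorem exists_homeomorph_apply_eq_of_isPreconnected {Ω : Set E} (ho : IsOpen Ω)
    (hc : IsPreconnected Ω) {p q : E} (hp : p ∈ Ω) (hq : q ∈ Ω) :
    ∃ h : E ≃ₜ E, h p = q ∧ EqOn h id Ωᶜ := by
  refine hc.induction₂' (fun p q ↦ ∃ h : E ≃ₜ E, h p = q ∧ EqOn h id Ωᶜ) ?_ ?_ hp hq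
  · intro x hx
    obtain ⟨r, hr, hball⟩ := Metric.isOpen_iff.1 ho x hx
    filter_upwards [mem_nhdsWithin_of_mem_nhds (Metric.ball_mem_nhds x hr)] with y hy
    obtain ⟨h, hxy, hfix⟩ := exists_homeomorph_of_mem_ball hy
    replace hfix := hfix.mono (compl_subset_compl.2 hball)
    exact ⟨⟨h, hxy, hfix⟩, h.symm, h.symm_apply_eq.2 hxy.symm,
      fun z hz ↦ h.symm_apply_eq.2 (hfix hz).symm⟩
  · rintro x y z _ _ _ ⟨h, rfl, hfix⟩ ⟨g, rfl, gfix⟩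
    exact ⟨h.trans g, rfl, fun w hw ↦ by simpa [hfix hw] using gfix hw⟩

end Drag

section Puncture

theorem isPreconnected_sdiff_singleton {X : Type*} [TopologicalSpace X] [T1Space X]
    {Ω B : Set X} {x : X} (hΩ : IsPreconnected Ω) (hB : IsOpen B) (hBΩ : B ⊆ Ω) (hx : x ∈ B)
    (hBx : IsPreconnected (B \ {x})) : IsPreconnected (Ω \ {x}) := by
  rw [isPreconnected_iff_subset_of_disjoint]
  have hside : ∀ u v : Set X, IsOpen u → IsOpen v → Ω \ {x} ⊆ u ∪ v → (Ω \ {x}) ∩ (u ∩ v) = ∅ →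
      B \ {x} ⊆ u → Ω \ {x} ⊆ u := by
    intro u v hu hv huv hdisj hBu
    have hcover : Ω ⊆ (u ∪ B) ∪ (v \ {x}) := fun y hy ↦ by
      by_cases hyx : y = x
      · exact .inl (.inr (hyx ▸ hx))
      · exact (huv ⟨hy, hyx⟩).imp .inl fun h ↦ ⟨h, hyx⟩
    have hdisj' : Ω ∩ ((u ∪ B) ∩ (v \ {x})) = ∅ := by
      refine eq_empty_of_forall_notMem fun y ⟨hy, hyu, hyv, hyx⟩ ↦ hdisj.subset ⟨⟨hy, hyx⟩, ?_, hyv⟩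
      exact hyu.elim id fun hyB ↦ hBu ⟨hyB, hyx⟩
    rcases isPreconnected_iff_subset_of_disjoint.1 hΩ _ _ (hu.union hB)
      (hv.sdiff isClosed_singleton) hcover hdisj' with h | h
    · exact fun y hy ↦ (h hy.1).elim id fun hyB ↦ hBu ⟨hyB, hy.2⟩
    · exact ((h (hBΩ hx)).2 rfl).elim
  intro u v hu hv huv hdisj
  have hsub : B \ {x} ⊆ Ω \ {x} := sdiff_subset_sdiff_left hBΩ
  refine (isPreconnected_iff_subset_of_disjoint.1 hBx u v hu hv (hsub.trans huv)
    (subset_empty_iff.1 (hdisj ▸ inter_subset_inter_left _ hsub))).imp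
    (hside u v hu hv huv hdisj) (hside v u hv hu (by rwa [union_comm]) (by rwa [inter_comm v]))

variable {E : Type*} [NormedAddCommGroup E] [NormedSpace ℝ E]

theorem isPreconnected_ball_sdiff_center (hE : 1 < Module.rank ℝ E) (x : E) {r : ℝ} (hr : 0 < r) :
    IsPreconnected (Metric.ball x r \ {x}) := by
  set φ := OpenPartialHomeomorph.univBall (E := E) x r
  have himage : φ '' {0}ᶜ = Metric.ball x r \ {x} := by
    have hinj : Function.Injective φ := by
      simpa [φ, injOn_univ] using φ.injOn
    rw [image_compl_eq_range_sdiff_image hinj, image_singleton,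
      OpenPartialHomeomorph.univBall_apply_zero, ← OpenPartialHomeomorph.univBall_target x hr,
      ← φ.image_source_eq_target, OpenPartialHomeomorph.univBall_source, image_univ]
  rw [← himage]
  exact (isConnected_compl_singleton_of_one_lt_rank hE 0).isPreconnected.image _
    (OpenPartialHomeomorph.continuous_univBall x r).continuousOn

theorem isPreconnected_sdiff_finite (hE : 1 < Module.rank ℝ E) {Ω F : Set E}
    (hc : IsPreconnected Ω) (ho : IsOpen Ω) (hF : F.Finite) : IsPreconnected (Ω \ F) := by
  induction F, hF using Set.Finite.induction_on with
  | empty => simpa using hc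
  | @insert x F _ hF ih =>
    have hopen : IsOpen (Ω \ F) := ho.sdiff hF.isClosed
    rw [← union_singleton, ← sdiff_sdiff]
    by_cases hx : x ∈ Ω \ F
    · obtain ⟨r, hr, hball⟩ := Metric.isOpen_iff.1 hopen x hx
      exact isPreconnected_sdiff_singleton ih Metric.isOpen_ball hball (Metric.mem_ball_self hr)
        (isPreconnected_ball_sdiff_center hE x hr)
    · rwa [sdiff_singleton_eq_self hx]

end Puncture

section Thread

variable {E : Type*} [NormedAddCommGroup E] [NormedSpace ℝ E]

theorem infinite_segment {x y : E} (h : x ≠ y) : (segment ℝ x y).Infinite := by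
  rw [segment_eq_image_lineMap]
  exact (Icc_infinite zero_lt_one).image (AffineMap.lineMap_injective ℝ h).injOn

theorem exists_ne_segment_subset [Nontrivial E] {Ω : Set E} (ho : IsOpen Ω) {x : E} (hx : x ∈ Ω) :
    ∃ p ≠ x, segment ℝ x p ⊆ Ω := by
  obtain ⟨r, hr, hball⟩ := Metric.isOpen_iff.1 ho x hx
  have : (𝓝[≠] x).NeBot := Module.punctured_nhds_neBot ℝ E x
  obtain ⟨p, hp, hpx⟩ :=
    (infinite_of_mem_nhds x (Metric.ball_mem_nhds x hr)).nontrivial.exists_ne x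
  exact ⟨p, hpx, ((convex_ball x r).segment_subset (Metric.mem_ball_self hr) hp).trans hball⟩

theorem image_subset_of_eqOn_compl {X : Type*} {Ω : Set X} {h : X → X}
    (hinj : Function.Injective h) (hfix : EqOn h id Ωᶜ) : h '' Ω ⊆ Ω := by
  rintro _ ⟨x, hx, rfl⟩
  by_contra hc
  exact hc ((hinj (hfix hc)).symm ▸ hx)

variable [CompleteSpace E]

theorem exists_homeomorph_apply_eq_eqOn_finite (hE : 1 < Module.rank ℝ E) {Ω F : Set E}
    (ho : IsOpen Ω) (hc : IsPreconnected Ω) (hF : F.Finite) {p q : E} (hp : p ∈ Ω \ F)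
    (hq : q ∈ Ω \ F) : ∃ h : E ≃ₜ E, h p = q ∧ EqOn h id F ∧ h '' Ω ⊆ Ω := by
  obtain ⟨h, hpq, hfix⟩ := exists_homeomorph_apply_eq_of_isPreconnected (ho.sdiff hF.isClosed)
    (isPreconnected_sdiff_finite hE hc ho hF) hp hq
  exact ⟨h, hpq, hfix.mono (subset_compl_comm.1 fun z hz ↦ hz.2),
    image_subset_of_eqOn_compl h.injective (hfix.mono (compl_subset_compl.2 sdiff_subset))⟩

theorem exists_homeomorph_segment_through (hE : 1 < Module.rank ℝ E) {Ω : Set E} (ho : IsOpen Ω)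
    (hc : IsPreconnected Ω) {x y : E} (hx : x ∈ Ω) (hy : y ∈ Ω) (hxy : x ≠ y) {s : Set E}
    (hs : s.Finite) (hsΩ : s ⊆ Ω) :
    ∃ (φ : E ≃ₜ E) (p : E), p ≠ x ∧ φ x = x ∧ φ p = y ∧ φ '' segment ℝ x p ⊆ Ω ∧
      s ⊆ φ '' segment ℝ x p := by
  induction s, hs using Set.Finite.induction_on with
  | empty =>
    have : Nontrivial E := rank_pos_iff_nontrivial.1 (zero_lt_one.trans hE)
    obtain ⟨p, hpx, hp⟩ := exists_ne_segment_subset ho hx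
    obtain ⟨h, hpy, hfix, hΩ⟩ := exists_homeomorph_apply_eq_eqOn_finite hE ho hc
      (finite_singleton x) ⟨hp (right_mem_segment ℝ x p), hpx⟩ ⟨hy, hxy.symm⟩
    exact ⟨h, p, hpx, hfix rfl, hpy, (image_mono hp).trans hΩ, empty_subset _⟩
  | @insert z s _ hs ih =>
    obtain ⟨φ, p, hpx, hφx, hφp, hφΩ, hφs⟩ := ih ((subset_insert z s).trans hsΩ)
    by_cases hz : z ∈ φ '' segment ℝ x p
    · exact ⟨φ, p, hpx, hφx, hφp, hφΩ, insert_subset hz hφs⟩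
    obtain ⟨F, hF⟩ : ∃ F : Set E, F = insert x (insert y s) := ⟨_, rfl⟩
    have hFfin : F.Finite := hF ▸ (hs.insert y).insert x
    have hFφ : F ⊆ φ '' segment ℝ x p := hF ▸ insert_subset
      ⟨x, left_mem_segment ℝ x p, hφx⟩ (insert_subset ⟨p, right_mem_segment ℝ x p, hφp⟩ hφs)
    obtain ⟨q, hq, hqF⟩ :=
      ((infinite_segment hpx.symm).image φ.injective.injOn).exists_notMem_finite hFfin
    obtain ⟨h, hqz, hfix, hΩ⟩ := exists_homeomorph_apply_eq_eqOn_finite hE ho hc hFfin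
      ⟨hφΩ hq, hqF⟩ ⟨hsΩ (mem_insert z s), fun hzF ↦ hz (hFφ hzF)⟩
    have himage : (φ.trans h) '' segment ℝ x p = h '' (φ '' segment ℝ x p) := image_comp h φ _
    refine ⟨φ.trans h, p, hpx, ?_, ?_, ?_, ?_⟩
    · simpa [hφx] using hfix (show x ∈ F by simp [hF])
    · simpa [hφp] using hfix (show y ∈ F by simp [hF])
    · exact himage ▸ (image_mono hφΩ).trans hΩ
    · rw [himage]
      refine insert_subset ⟨q, hq, hqz⟩ fun w hw ↦ ⟨w, hφs hw, hfix (hF ▸ ?_)⟩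
      exact mem_insert_of_mem _ (mem_insert_of_mem _ hw)

theorem exists_injective_curve_through (hE : 1 < Module.rank ℝ E) {Ω : Set E} (ho : IsOpen Ω)
    (hc : IsPreconnected Ω) (hne : Ω.Nonempty) {s : Set E} (hs : s.Finite) (hsΩ : s ⊆ Ω) :
    ∃ g : ℝ → E, Continuous g ∧ Function.Injective g ∧ MapsTo g (Icc 0 1) Ω ∧
      s ⊆ g '' Icc 0 1 := by
  have : Nontrivial E := rank_pos_iff_nontrivial.1 (zero_lt_one.trans hE)
  obtain ⟨x, hx⟩ := hne
  obtain ⟨y, hyx, hy⟩ := exists_ne_segment_subset ho hx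
  obtain ⟨φ, p, hpx, -, -, hφΩ, hsφ⟩ := exists_homeomorph_segment_through hE ho hc hx
    (hy (right_mem_segment ℝ x y)) hyx.symm hs hsΩ
  rw [segment_eq_image_lineMap, ← image_comp] at hφΩ hsφ
  exact ⟨φ ∘ AffineMap.lineMap x p, φ.continuous.comp AffineMap.lineMap_continuous,
    φ.injective.comp (AffineMap.lineMap_injective ℝ hpx.symm), mapsTo_iff_image_subset.2 hφΩ, hsφ⟩

end Thread

/-- `s` is an arc from `x` to `y`: the image of an injective path from `x` to `y`. -/
def IsArc {X : Type*} [TopologicalSpace X] (s : Set X) (x y : X) : Prop :=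
  ∃ γ : Path x y, Function.Injective γ ∧ range γ = s

namespace IsArc

variable {X Y : Type*} [TopologicalSpace X] [TopologicalSpace Y] {s t : Set X} {x y z : X}

theorem left_mem (h : IsArc s x y) : x ∈ s := by
  obtain ⟨γ, -, rfl⟩ := h
  exact ⟨0, γ.source⟩

theorem ne (h : IsArc s x y) : x ≠ y := by
  obtain ⟨γ, hγ, -⟩ := h
  exact fun hxy ↦ zero_ne_one (hγ (by rw [γ.source, γ.target, hxy]))

theorem symm (h : IsArc s x y) : IsArc s y x := by
  obtain ⟨γ, hγ, rfl⟩ := h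
  exact ⟨γ.symm, hγ.comp unitInterval.symm_bijective.injective, γ.symm_range⟩

theorem right_mem (h : IsArc s x y) : y ∈ s :=
  h.symm.left_mem

theorem apply_mem {x : Bool → X} (h : IsArc s (x false) (x true)) (b : Bool) : x b ∈ s :=
  b.rec h.left_mem h.right_mem

theorem injective {x : Bool → X} (h : IsArc s (x false) (x true)) : Function.Injective x :=
  Bool.injective_iff.2 h.ne

theorem trans (hs : IsArc s x y) (ht : IsArc t y z) (hst : s ∩ t ⊆ {y}) :
    IsArc (s ∪ t) x z := by
  obtain ⟨γ, hγ, rfl⟩ := hs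
  obtain ⟨δ, hδ, rfl⟩ := ht
  refine ⟨γ.trans δ, fun u v huv ↦ ?_, γ.trans_range δ⟩
  have hmeet : ∀ u v : unitInterval, γ u = δ v → u = 1 ∧ v = 0 := fun u v h ↦ by
    have hy : γ u = y := hst ⟨⟨u, rfl⟩, ⟨v, h.symm⟩⟩
    exact ⟨hγ (hy.trans γ.target.symm), hδ ((h.symm.trans hy).trans δ.source.symm)⟩
  rw [Path.trans_apply, Path.trans_apply] at huv
  split_ifs at huv with hu hv hv
  · have := congrArg Subtype.val (hγ huv)
    exact Subtype.ext (by simpa using this)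
  · have h0 := congrArg Subtype.val (hmeet _ _ huv).2
    rw [Icc.coe_zero] at h0
    linarith
  · have h0 := congrArg Subtype.val (hmeet _ _ huv.symm).2
    rw [Icc.coe_zero] at h0
    linarith
  · have := congrArg Subtype.val (hδ huv)
    simp only at this
    exact Subtype.ext (by linarith)

theorem image {f : X → Y} (h : IsArc s x y) (hf : Continuous f) (hinj : Function.Injective f) :
    IsArc (f '' s) (f x) (f y) := by
  obtain ⟨γ, hγ, rfl⟩ := h
  exact ⟨γ.map hf, hinj.comp hγ, by rw [Path.map_coe, range_comp]⟩

end IsArc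

theorem injective_endpoints_of_pairwise_disjoint {X Edge : Type*} [TopologicalSpace X]
    {K : Edge → Set X} {x : Edge → Bool → X} (hK : ∀ ε, IsArc (K ε) (x ε false) (x ε true))
    (hKd : Pairwise (Function.onFun Disjoint K)) :
    Function.Injective fun h : Edge × Bool ↦ x h.1 h.2 := by
  rintro ⟨ε, b⟩ ⟨ε', b'⟩ h
  dsimp only at h
  obtain rfl : ε = ε' :=
    hKd.eq (not_disjoint_iff.2 ⟨x ε b, (hK ε).apply_mem b, h ▸ (hK ε').apply_mem b'⟩)
  rw [(hK ε).injective h]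

theorem isArc_image_Icc {X : Type*} [TopologicalSpace X] {f : ℝ → X} {a b : ℝ}
    (hf : ContinuousOn f (Icc a b)) (hab : a < b) (hinj : InjOn f (Icc a b)) :
    IsArc (f '' Icc a b) (f a) (f b) := by
  let e := iccHomeoI a b hab
  refine ⟨⟨⟨fun t ↦ f (e.symm t), ?_⟩, ?_, ?_⟩, ?_, ?_⟩
  · exact hf.comp_continuous (by fun_prop) fun t ↦ (e.symm t).2
  · simp [e]
  · simp [e]
  · exact fun u v huv ↦ e.symm.injective (Subtype.ext (hinj (e.symm u).2 (e.symm v).2 huv))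
  · change range (f ∘ Subtype.val ∘ e.symm) = _
    rw [range_comp, range_comp, e.symm.range_coe, image_univ, Subtype.range_coe]

theorem isArc_segment {E : Type*} [NormedAddCommGroup E] [NormedSpace ℝ E] {x y : E} (h : x ≠ y) :
    IsArc (segment ℝ x y) x y := by
  rw [segment_eq_image_lineMap]
  simpa using isArc_image_Icc (AffineMap.lineMap_continuous (p := x) (q := y)).continuousOn
    zero_lt_one (AffineMap.lineMap_injective ℝ h).injOn

section Star

theorem exists_first_mem {X : Type*} [TopologicalSpace X] {L : ℝ → X} {S : Set X} {a b : ℝ}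
    (hL : ContinuousOn L (Icc a b)) (hS : IsClosed S) (h : ∃ t ∈ Icc a b, L t ∈ S) :
    ∃ t ∈ Icc a b, L t ∈ S ∧ ∀ s ∈ Ico a t, L s ∉ S := by
  have hcompact : IsCompact (Icc a b ∩ L ⁻¹' S) :=
    isCompact_Icc.of_isClosed_subset (hL.preimage_isClosed_of_isClosed isClosed_Icc hS)
      inter_subset_left
  obtain ⟨t, ⟨ht, htS⟩, hmin⟩ := hcompact.exists_isLeast h
  exact ⟨t, ht, htS, fun s hs hsS ↦ (hmin ⟨⟨hs.1, hs.2.le.trans ht.2⟩, hsS⟩).not_gt hs.2⟩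

theorem exists_forall_and_pairwise {ι α : Type*} [Finite ι] [Nonempty α] {P : ι → α → Prop}
    {r : ι → α → ι → α → Prop}
    (h : ∀ (i : ι) (D : Finset ι) (f : ι → α), i ∉ D → (∀ j ∈ D, P j (f j)) →
      (D : Set ι).Pairwise (fun j l ↦ r j (f j) l (f l)) →
      ∃ y, P i y ∧ ∀ j ∈ D, r i y j (f j) ∧ r j (f j) i y) :
    ∃ f : ι → α, (∀ i, P i (f i)) ∧ Pairwise fun i j ↦ r i (f i) j (f j) := by
  classical
  cases nonempty_fintype ι
  suffices H : ∀ D : Finset ι, ∃ f : ι → α, (∀ i ∈ D, P i (f i)) ∧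
      (D : Set ι).Pairwise fun i j ↦ r i (f i) j (f j) by
    simpa [pairwise_univ] using H Finset.univ
  intro D
  induction D using Finset.induction_on with
  | empty => exact ⟨fun _ ↦ Classical.arbitrary α, by simp, by simp⟩
  | insert i D hi ih =>
    obtain ⟨f, hP, hr⟩ := ih
    obtain ⟨y, hy, hyr⟩ := h i D f hi hP hr
    have hf : ∀ j ∈ D, Function.update f i y j = f j := fun j hj ↦
      Function.update_of_ne (ne_of_mem_of_not_mem hj hi) _ _
    refine ⟨Function.update f i y, ?_, ?_⟩
    · simp only [Finset.forall_mem_insert, Function.update_self]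
      exact ⟨hy, fun j hj ↦ (hf j hj).symm ▸ hP j hj⟩
    · rw [Finset.coe_insert, pairwise_insert_of_notMem (by exact_mod_cast hi)]
      refine ⟨fun j hj l hl hjl ↦ ?_, fun j hj ↦ ?_⟩
      · simp only [hf j hj, hf l hl]
        exact hr hj hl hjl
      · rw [hf j hj, Function.update_self]
        exact hyr j hj

variable {E : Type*} [NormedAddCommGroup E] [NormedSpace ℝ E] {a : E}

theorem isClosed_segment (x y : E) : IsClosed (segment ℝ x y) := by
  rw [segment_eq_image_lineMap]
  exact (isCompact_Icc.image AffineMap.lineMap_continuous).isClosed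

theorem eventually_segment_subset {O : Set E} (hO : IsOpen O) {x : E} (hx : segment ℝ a x ⊆ O) :
    ∀ᶠ y in 𝓝 x, segment ℝ a y ⊆ O := by
  simp only [segment_eq_image_lineMap, image_subset_iff] at hx ⊢
  refine isCompact_Icc.eventually_forall_of_forall_eventually fun t ht ↦ ?_
  have hcont : Continuous fun z : E × ℝ ↦ AffineMap.lineMap a z.1 z.2 := by
    simp only [AffineMap.lineMap_apply]
    fun_prop
  exact hcont.continuousAt.eventually (hO.mem_nhds (hx ht))

theorem segment_subset_of_mem {x y : E} (h : x ∈ segment ℝ a y) :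
    segment ℝ a x ⊆ segment ℝ a y :=
  (convex_segment a y).segment_subset (left_mem_segment ℝ a y) h

theorem segment_inter_segment_subset_singleton {v w : E} (hv : v ∉ segment ℝ a w)
    (hw : w ∉ segment ℝ a v) : segment ℝ a v ∩ segment ℝ a w ⊆ {a} := by
  rintro x ⟨hxv, hxw⟩
  by_contra hxa
  rw [mem_segment_iff_wbtw] at hxv hxw hv hw
  have hray : SameRay ℝ (v -ᵥ a) (w -ᵥ a) :=
    (hxv.sameRay_vsub_left.symm).trans hxw.sameRay_vsub_left
      fun h ↦ absurd (vsub_eq_zero_iff_eq.1 h) hxa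
  exact (wbtw_total_of_sameRay_vsub_left hray).elim hv hw

theorem exists_segment_disjoint {U K T : Set E} (hU : IsOpen U) (hK : IsClosed K) (hT : T.Finite)
    (hTK : T ⊆ K) (hTU : ∀ w ∈ T, segment ℝ a w ⊆ U) (hTs : ∀ w ∈ T, segment ℝ a w ∩ K ⊆ {w})
    {L : ℝ → E} (hL : Continuous L) (hL0 : L 0 ∉ U) (hLK : Disjoint (L '' Icc 0 1) K)
    (hLT : ∃ t ∈ Icc (0 : ℝ) 1, L t ∈ ⋃ w ∈ T, segment ℝ a w) :
    ∃ τ ∈ Ioc (0 : ℝ) 1, segment ℝ a (L τ) ⊆ U \ K ∧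
      segment ℝ a (L τ) ∩ L '' Icc 0 τ ⊆ {L τ} ∧
      ∀ w ∈ T, Disjoint (segment ℝ a w) (L '' Icc 0 τ) ∧
        segment ℝ a w ∩ segment ℝ a (L τ) ⊆ {a} := by
  obtain ⟨t₀, ht₀, hit, hbefore⟩ := exists_first_mem hL.continuousOn
    (hT.isClosed_biUnion fun w _ ↦ isClosed_segment a w) hLT
  obtain ⟨w, hw, hxw⟩ := mem_iUnion₂.1 hit
  have hxK : segment ℝ a (L t₀) ⊆ U \ K := by
    have hsub := segment_subset_of_mem hxw
    refine fun z hz ↦ ⟨hTU w hw (hsub hz), fun hzK ↦ ?_⟩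
    obtain rfl : z = w := hTs w hw ⟨hsub hz, hzK⟩
    have hxz : L t₀ = z := wbtw_swap_right_iff ℝ a |>.1
      ⟨mem_segment_iff_wbtw.1 hxw, mem_segment_iff_wbtw.1 hz⟩
    exact disjoint_left.1 hLK ⟨t₀, ht₀, hxz⟩ hzK
  have ht₀pos : 0 < t₀ := ht₀.1.lt_of_ne fun h ↦
    hL0 (h ▸ (hxK (right_mem_segment ℝ a _)).1)
  -- Just before `t₀` the curve is off all the segments to `T`, but the segment from `a` still
  -- avoids `K`; the curve is cut where it first meets such a segment.
  obtain ⟨t₁, ht₁K, ht₁⟩ := ((((hL.tendsto t₀).mono_left nhdsWithin_le_nhds).eventually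
    (eventually_segment_subset (hU.sdiff hK) hxK)).and (Ioo_mem_nhdsLT ht₀pos)).exists
  obtain ⟨τ, hτ, hτmem, hτbefore⟩ := exists_first_mem hL.continuousOn
    (isClosed_segment a (L t₁)) ⟨t₁, right_mem_Icc.2 ht₁.1.le, right_mem_segment ℝ a _⟩
  have hτsub := segment_subset_of_mem hτmem
  have hτK := hτsub.trans ht₁K
  have hτpos : 0 < τ := hτ.1.lt_of_ne fun h ↦ hL0 (h ▸ (hτK (right_mem_segment ℝ a _)).1)
  have hdisj : ∀ w ∈ T, Disjoint (segment ℝ a w) (L '' Icc 0 τ) := by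
    rintro w hw
    refine disjoint_right.2 ?_
    rintro _ ⟨s, hs, rfl⟩ hsw
    exact hbefore s ⟨hs.1, (hs.2.trans hτ.2).trans_lt ht₁.2⟩ (mem_biUnion hw hsw)
  refine ⟨τ, ⟨hτpos, (hτ.2.trans ht₁.2.le).trans ht₀.2⟩, hτK, ?_, fun w hw ↦ ⟨hdisj w hw, ?_⟩⟩
  · rintro _ ⟨hz, s, hs, rfl⟩
    have hsτ : s = τ := hs.2.eq_of_not_lt fun h ↦ hτbefore s ⟨hs.1, h⟩ (hτsub hz)
    rw [hsτ, mem_singleton_iff]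
  · refine segment_inter_segment_subset_singleton (fun hwτ ↦ (hτK hwτ).2 (hTK hw)) fun hτw ↦ ?_
    exact disjoint_left.1 (hdisj w hw) hτw ⟨τ, right_mem_Icc.2 hτpos.le, rfl⟩

/-- `IsStarArm a e U L t`: the curve `L`, followed up to time `t` and then left along the segment
to the centre `a`, is an arm of a star inside `U`. The arm avoids the reference segment from `a` to
`e`, along which further arms are led to the centre. -/
structure IsStarArm (a e : E) (U : Set E) (L : ℝ → E) (t : ℝ) : Prop where
  mem_Ioc : t ∈ Ioc (0 : ℝ) 1
  segment_subset : segment ℝ a (L t) ⊆ U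
  segment_inter_subset : segment ℝ a (L t) ∩ L '' Icc 0 t ⊆ {L t}
  notMem_segment : e ∉ segment ℝ a (L t)
  disjoint_segment : Disjoint (segment ℝ a e) (L '' Icc 0 t)

/-- The segment of the star arm given by `L` and `t` meets the star arm given by `M` and `s` in the
centre `a` only. -/
def StarArmAvoids (a : E) (L : ℝ → E) (t : ℝ) (M : ℝ → E) (s : ℝ) : Prop :=
  Disjoint (segment ℝ a (L t)) (M '' Icc 0 s) ∧ segment ℝ a (L t) ∩ segment ℝ a (M s) ⊆ {a}

theorem exists_isStarArm {ι : Type*} {D : Set ι} (hD : D.Finite) {U : Set E} (hU : IsOpen U) {e : E}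
    (he : segment ℝ a e ⊆ U) {L : ι → ℝ → E} (hL : ∀ j ∈ D, Continuous (L j)) {t : ι → ℝ}
    (harm : ∀ j ∈ D, IsStarArm a e U (L j) (t j))
    (hpair : D.Pairwise fun j l ↦ StarArmAvoids a (L j) (t j) (L l) (t l)) {M : ℝ → E}
    (hM : Continuous M) (hM0 : M 0 ∉ U) (hMe : M 1 ∈ segment ℝ a e) (heM : e ∉ M '' Icc 0 1)
    (hML : ∀ j ∈ D, Disjoint (M '' Icc 0 1) (L j '' Icc 0 1)) :
    ∃ s, IsStarArm a e U M s ∧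
      ∀ j ∈ D, StarArmAvoids a M s (L j) (t j) ∧ StarArmAvoids a (L j) (t j) M s := by
  obtain ⟨T, hT⟩ : ∃ T, T = insert e ((fun j ↦ L j (t j)) '' D) := ⟨_, rfl⟩
  obtain ⟨K, hK⟩ : ∃ K, K = insert e (⋃ j ∈ D, L j '' Icc 0 (t j)) := ⟨_, rfl⟩
  have heT : e ∈ T := hT ▸ mem_insert e _
  have heK : e ∈ K := hK ▸ mem_insert e _
  have hKclosed : IsClosed K := by
    rw [hK, insert_eq]
    exact isClosed_singleton.union
      (hD.isClosed_biUnion fun j hj ↦ (isCompact_Icc.image (hL j hj)).isClosed)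
  have htail : ∀ j ∈ D, L j '' Icc 0 (t j) ⊆ K := fun j hj ↦ hK ▸
    (subset_biUnion_of_mem (u := fun j ↦ L j '' Icc 0 (t j)) hj).trans (subset_insert e _)
  have hTK : T ⊆ K := hT ▸ insert_subset heK (image_subset_iff.2 fun j hj ↦
    htail j hj ⟨t j, right_mem_Icc.2 (harm j hj).mem_Ioc.1.le, rfl⟩)
  have hTU : ∀ w ∈ T, segment ℝ a w ⊆ U := hT ▸ forall_mem_insert.2
    ⟨he, forall_mem_image.2 fun j hj ↦ (harm j hj).segment_subset⟩
  have hTs : ∀ w ∈ T, segment ℝ a w ∩ K ⊆ {w} := by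
    rw [hT, hK]
    rintro _ (rfl | ⟨j, hj, rfl⟩) z ⟨hz, rfl | hzK⟩
    · rfl
    · obtain ⟨l, hl, hzl⟩ := mem_iUnion₂.1 hzK
      exact (disjoint_left.1 (harm l hl).disjoint_segment hz hzl).elim
    · exact ((harm j hj).notMem_segment hz).elim
    · obtain ⟨l, hl, hzl⟩ := mem_iUnion₂.1 hzK
      obtain rfl | hjl := eq_or_ne j l
      · exact (harm j hj).segment_inter_subset ⟨hz, hzl⟩
      · exact (disjoint_left.1 (hpair hj hl hjl).1 hz hzl).elim
  have hMK : Disjoint (M '' Icc 0 1) K := by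
    rw [hK, disjoint_insert_right, disjoint_iUnion₂_right]
    exact ⟨heM, fun j hj ↦ (hML j hj).mono_right
      (image_mono (Icc_subset_Icc_right (harm j hj).mem_Ioc.2))⟩
  obtain ⟨s, hs, hsK, hstail, hsT⟩ := exists_segment_disjoint hU hKclosed
    (hT ▸ (hD.image _).insert e) hTK hTU hTs hM hM0 hMK
    ⟨1, right_mem_Icc.2 zero_le_one, mem_biUnion heT hMe⟩
  refine ⟨s, ⟨hs, hsK.trans sdiff_subset, hstail, fun h ↦ (hsK h).2 heK, (hsT e heT).1⟩,
    fun j hj ↦ ⟨⟨(disjoint_sdiff_left.mono_left hsK).mono_right (htail j hj), ?_⟩, ?_⟩⟩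
  · exact inter_comm (segment ℝ a (L j (t j))) _ ▸
      (hsT _ (hT ▸ mem_insert_of_mem e ⟨j, hj, rfl⟩)).2
  · exact hsT _ (hT ▸ mem_insert_of_mem e ⟨j, hj, rfl⟩)

theorem exists_arcs_of_mem_segment {ι : Type*} [Finite ι] {U : Set E} (hU : IsOpen U) {e : E}
    (he : segment ℝ a e ⊆ U) {L : ι → ℝ → E} (hL : ∀ i, Continuous (L i))
    (hinj : ∀ i, InjOn (L i) (Icc 0 1)) (hL0 : ∀ i, L i 0 ∉ U)
    (hLU : ∀ i, MapsTo (L i) (Ioc 0 1) U)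
    (hdisj : Pairwise (Function.onFun Disjoint fun i ↦ L i '' Icc 0 1))
    (haL : ∀ i, a ∉ L i '' Icc 0 1) (heL : ∀ i, e ∉ L i '' Icc 0 1)
    (hLe : ∀ i, L i 1 ∈ segment ℝ a e) :
    ∃ S : ι → Set E, (∀ i, IsArc (S i) a (L i 0) ∧ S i ⊆ insert (L i 0) U) ∧
      Pairwise fun i j ↦ S i ∩ S j ⊆ {a} := by
  obtain ⟨τ, hτ, hpair⟩ : ∃ τ : ι → ℝ, (∀ i, IsStarArm a e U (L i) (τ i)) ∧
      Pairwise fun i j ↦ StarArmAvoids a (L i) (τ i) (L j) (τ j) :=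
    exists_forall_and_pairwise fun i D t hi harm havoid ↦
      exists_isStarArm D.finite_toSet hU he (fun j _ ↦ hL j) harm havoid (hL i) (hL0 i) (hLe i)
        (heL i) fun j hj ↦ hdisj (ne_of_mem_of_not_mem hj hi).symm
  have hIcc : ∀ i, Icc 0 (τ i) ⊆ Icc (0 : ℝ) 1 := fun i ↦ Icc_subset_Icc_right (hτ i).mem_Ioc.2
  refine ⟨fun i ↦ segment ℝ a (L i (τ i)) ∪ L i '' Icc 0 (τ i), fun i ↦ ⟨?_, ?_⟩, ?_⟩
  · have htip : a ≠ L i (τ i) := fun h ↦ haL i ⟨τ i, Ioc_subset_Icc_self (hτ i).mem_Ioc, h.symm⟩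
    exact (isArc_segment htip).trans (isArc_image_Icc (hL i).continuousOn (hτ i).mem_Ioc.1
      ((hinj i).mono (hIcc i))).symm (hτ i).segment_inter_subset
  · refine union_subset ((hτ i).segment_subset.trans (subset_insert _ _)) ?_
    rintro _ ⟨t, ht, rfl⟩
    rcases ht.1.eq_or_lt with rfl | h0
    · exact mem_insert _ _
    · exact mem_insert_of_mem _ (hLU i ⟨h0, (hIcc i ht).2⟩)
  · rintro i j hij z ⟨hzi | hzi, hzj | hzj⟩
    · exact (hpair hij).2 ⟨hzi, hzj⟩
    · exact (disjoint_left.1 (hpair hij).1 hzi hzj).elim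
    · exact (disjoint_left.1 (hpair hij.symm).1 hzj hzi).elim
    · exact (disjoint_left.1 (hdisj hij) (image_mono (hIcc i) hzi) (image_mono (hIcc j) hzj)).elim

variable [CompleteSpace E]

theorem exists_star_of_arms (hE : 1 < Module.rank ℝ E) {ι : Type*} [Finite ι] {U : Set E}
    (hU : IsOpen U) (hUc : IsPreconnected U) (ha : a ∈ U) {L : ι → ℝ → E}
    (hL : ∀ i, Continuous (L i)) (hinj : ∀ i, InjOn (L i) (Icc 0 1)) (hL0 : ∀ i, L i 0 ∉ U)
    (hLU : ∀ i, MapsTo (L i) (Ioc 0 1) U)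
    (hdisj : Pairwise (Function.onFun Disjoint fun i ↦ L i '' Icc 0 1))
    (haL : ∀ i, a ∉ L i '' Icc 0 1) :
    ∃ S : ι → Set E, (∀ i, IsArc (S i) a (L i 0) ∧ S i ⊆ insert (L i 0) U) ∧
      Pairwise fun i j ↦ S i ∩ S j ⊆ {a} := by
  have : Nontrivial E := rank_pos_iff_nontrivial.1 (zero_lt_one.trans hE)
  have hopen : IsOpen (U \ ⋃ i, L i '' Icc 0 1) :=
    hU.sdiff (isClosed_iUnion_of_finite fun i ↦ (isCompact_Icc.image (hL i)).isClosed)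
  obtain ⟨b, hba, hb⟩ := exists_ne_segment_subset hopen (x := a) ⟨ha, by simpa using haL⟩
  obtain ⟨hbU, hbL⟩ := hb (right_mem_segment ℝ a b)
  obtain ⟨φ, e, -, hφa, hφe, hφU, hφL⟩ := exists_homeomorph_segment_through hE hU hUc ha hbU
    hba.symm (finite_range fun i ↦ L i 1)
    (range_subset_iff.2 fun i ↦ hLU i (right_mem_Ioc.2 zero_lt_one))
  have himage : ∀ i, (fun t ↦ φ.symm (L i t)) '' Icc 0 1 = φ ⁻¹' (L i '' Icc 0 1) := fun i ↦ by
    rw [← φ.image_symm, image_image]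
  obtain ⟨S, hS, hpair⟩ := exists_arcs_of_mem_segment (hU.preimage φ.continuous)
    (image_subset_iff.1 hφU) (L := fun i t ↦ φ.symm (L i t))
    (fun i ↦ φ.symm.continuous.comp (hL i)) (fun i ↦ φ.symm.injective.comp_injOn (hinj i))
    (by simpa using hL0) (fun i t ht ↦ by simpa using hLU i ht)
    (fun i j hij ↦ by simpa only [Function.onFun, himage] using (hdisj hij).preimage φ)
    (fun i ↦ by simpa [himage, hφa] using haL i)
    (fun i ↦ by simpa only [himage, mem_preimage, hφe] using fun h ↦ hbL (mem_iUnion.2 ⟨i, h⟩))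
    (fun i ↦ by simpa [← φ.preimage_symm] using hφL (mem_range_self i))
  refine ⟨fun i ↦ φ '' S i, fun i ↦ ⟨?_, ?_⟩, fun i j hij ↦ ?_⟩
  · simpa [hφa] using (hS i).1.image φ.continuous φ.injective
  · refine (image_mono (hS i).2).trans ?_
    simp [image_insert_eq]
  · simp only [← image_inter φ.injective, image_subset_iff]
    exact (hpair hij).trans (by simp [hφa])

end Star

section Joining

variable {E : Type*} [NormedAddCommGroup E] [NormedSpace ℝ E]

/-- A point outside `U` is (linearly) accessible from `U` if some segment starting at it runs
immediately into `U`. -/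
def IsAccessible (U : Set E) (x : E) : Prop :=
  x ∉ U ∧ ∃ c, openSegment ℝ x c ⊆ U

theorem eventually_segment_lineMap_subset {O : Set E} (hO : IsOpen O) {x : E} (hx : x ∈ O)
    (c : E) : ∀ᶠ δ in 𝓝 (0 : ℝ), segment ℝ x (AffineMap.lineMap x c δ) ⊆ O := by
  have hlim : Tendsto (AffineMap.lineMap x c) (𝓝 (0 : ℝ)) (𝓝 x) :=
    AffineMap.lineMap_continuous.tendsto' _ _ (AffineMap.lineMap_apply_zero x c)
  exact hlim.eventually (eventually_segment_subset hO (by simpa using hx))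

variable [CompleteSpace E]

theorem exists_star_of_isAccessible (hE : 1 < Module.rank ℝ E) {ι : Type*} [Finite ι] {U : Set E}
    (hU : IsOpen U) (hUc : IsPreconnected U) {a : E} (ha : a ∈ U) {x : ι → E}
    (hinj : Function.Injective x) (hx : ∀ i, IsAccessible U (x i)) :
    ∃ S : ι → Set E, (∀ i, IsArc (S i) a (x i) ∧ S i ⊆ insert (x i) U) ∧
      Pairwise fun i j ↦ S i ∩ S j ⊆ {a} := by
  choose hxU c hc using hx
  obtain ⟨N, hN, hNd⟩ := (finite_range x).t2_separation
  have hsmall : ∀ i, ∀ᶠ δ in 𝓝 (0 : ℝ),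
      segment ℝ (x i) (AffineMap.lineMap (x i) (c i) δ) ⊆ N (x i) \ {a} := fun i ↦
    eventually_segment_lineMap_subset ((hN (x i)).2.sdiff isClosed_singleton)
      ⟨(hN (x i)).1, fun h ↦ hxU i (h ▸ ha)⟩ (c i)
  obtain ⟨δ, hδN, hδ⟩ := (((eventually_all.2 hsmall).filter_mono nhdsWithin_le_nhds).and
    (Ioo_mem_nhdsGT (zero_lt_one' ℝ))).exists
  have hne : ∀ i, x i ≠ AffineMap.lineMap (x i) (c i) δ := fun i h ↦ hxU i <|
    hc i <| openSegment_eq_image_lineMap ℝ (x i) (c i) ▸ ⟨δ, hδ, h.symm⟩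
  have himage : ∀ i, AffineMap.lineMap (x i) (AffineMap.lineMap (x i) (c i) δ) '' Icc (0 : ℝ) 1 ⊆
      N (x i) \ {a} := fun i ↦ segment_eq_image_lineMap ℝ (x i) _ ▸ hδN i
  have hmaps : ∀ i, MapsTo (AffineMap.lineMap (x i) (AffineMap.lineMap (x i) (c i) δ))
      (Ioc (0 : ℝ) 1) U := fun i t ht ↦ by
    rw [AffineMap.lineMap_lineMap_right]
    refine hc i (openSegment_eq_image_lineMap ℝ (x i) (c i) ▸ ⟨t * δ, ⟨mul_pos ht.1 hδ.1, ?_⟩, rfl⟩)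
    exact (mul_le_of_le_one_left hδ.1.le ht.2).trans_lt hδ.2
  simpa using exists_star_of_arms hE hU hUc ha (fun i ↦ AffineMap.lineMap_continuous)
    (fun i ↦ (AffineMap.lineMap_injective ℝ (hne i)).injOn) (by simpa using hxU) hmaps
    (fun i j hij ↦ (hNd ⟨i, rfl⟩ ⟨j, rfl⟩ (hinj.ne hij)).mono ((himage i).trans sdiff_subset)
      ((himage j).trans sdiff_subset)) fun i h ↦ (himage i h).2 rfl

theorem exists_stars_of_isAccessible (hE : 1 < Module.rank ℝ E) {W ι : Type*} [Finite ι]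
    {U : W → Set E} (hU : ∀ w, IsOpen (U w)) (hUc : ∀ w, IsPreconnected (U w))
    (hUd : Pairwise (Function.onFun Disjoint U)) {a : W → E} (ha : ∀ w, a w ∈ U w) {v : ι → W}
    {x : ι → E} (hinj : Function.Injective x) (hx : ∀ i, IsAccessible (U (v i)) (x i))
    (hxU : ∀ i w, x i ∉ U w) :
    ∃ S : ι → Set E, (∀ i, IsArc (S i) (a (v i)) (x i) ∧ S i ⊆ insert (x i) (U (v i))) ∧
      Pairwise fun i j ↦ S i ∩ S j ⊆ a '' ({v i} ∩ {v j}) := by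
  have hstar : ∀ w, ∃ S : {i // v i = w} → Set E,
      (∀ i, IsArc (S i) (a w) (x i) ∧ S i ⊆ insert (x i) (U w)) ∧
        Pairwise fun i j ↦ S i ∩ S j ⊆ {a w} := fun w ↦
    exists_star_of_isAccessible hE (hU w) (hUc w) (ha w) (hinj.comp Subtype.val_injective)
      fun ⟨i, hi⟩ ↦ by simpa only [hi] using hx i
  choose S hS hSpair using hstar
  refine ⟨fun i ↦ S (v i) ⟨i, rfl⟩, fun i ↦ hS (v i) ⟨i, rfl⟩, ?_⟩
  rintro i j hij z ⟨hzi, hzj⟩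
  have hv : v i = v j := by
    by_contra hv
    rcases (hS (v i) ⟨i, rfl⟩).2 hzi with rfl | hzi
    · rcases (hS (v j) ⟨j, rfl⟩).2 hzj with h | hzj
      · exact hij (hinj h)
      · exact hxU i _ hzj
    · rcases (hS (v j) ⟨j, rfl⟩).2 hzj with rfl | hzj
      · exact hxU j _ hzi
      · exact disjoint_left.1 (hUd hv) hzi hzj
  have hS' : ∀ w (hw : v j = w), S w ⟨j, hw⟩ = S (v j) ⟨j, rfl⟩ := by
    rintro _ rfl
    rfl
  have hza : z = a (v i) := hSpair (v i) (i := ⟨i, rfl⟩) (j := ⟨j, hv.symm⟩)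
    (fun h ↦ hij (congrArg Subtype.val h)) ⟨hzi, (hS' _ hv.symm).symm ▸ hzj⟩
  exact ⟨v i, ⟨rfl, hv⟩, hza.symm⟩

theorem exists_arcs_of_cores (hE : 1 < Module.rank ℝ E) {W Edge : Type*} [Finite Edge]
    {U : W → Set E} (hU : ∀ w, IsOpen (U w)) (hUc : ∀ w, IsPreconnected (U w))
    (hUd : Pairwise (Function.onFun Disjoint U)) {a : W → E} (ha : ∀ w, a w ∈ U w)
    {K : Edge → Set E} {x : Edge → Bool → E} {v : Edge → Bool → W}
    (hK : ∀ ε, IsArc (K ε) (x ε false) (x ε true)) (hKd : Pairwise (Function.onFun Disjoint K))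
    (hKU : ∀ ε w, Disjoint (K ε) (U w)) (hv : ∀ ε, v ε false ≠ v ε true)
    (hx : ∀ ε b, IsAccessible (U (v ε b)) (x ε b)) :
    ∃ Arc : Edge → Set E, (∀ ε, IsArc (Arc ε) (a (v ε false)) (a (v ε true)) ∧
        Arc ε ⊆ K ε ∪ ⋃ b, U (v ε b)) ∧
      Pairwise fun ε ε' ↦ Arc ε ∩ Arc ε' ⊆ a '' (range (v ε) ∩ range (v ε')) := by
  have hxK : ∀ ε b, x ε b ∈ K ε := fun ε ↦ (hK ε).apply_mem
  obtain ⟨S, hS, hSpair⟩ := exists_stars_of_isAccessible hE hU hUc hUd ha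
    (injective_endpoints_of_pairwise_disjoint hK hKd) (v := fun h ↦ v h.1 h.2)
    (fun h ↦ hx h.1 h.2) fun h w ↦ disjoint_left.1 (hKU _ w) (hxK _ _)
  have hSK : ∀ h ε, S h ∩ K ε ⊆ {x h.1 h.2} := by
    rintro h ε z ⟨hz, hzK⟩
    exact ((hS h).2 hz).resolve_right fun hzU ↦ disjoint_left.1 (hKU ε _) hzK hzU
  have hSK' : ∀ h ε, h.1 ≠ ε → Disjoint (S h) (K ε) := fun h ε hne ↦ disjoint_left.2
    fun z hz hzK ↦ disjoint_left.1 (hKd hne) (hSK h ε ⟨hz, hzK⟩ ▸ hxK h.1 h.2) hzK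
  refine ⟨fun ε ↦ S (ε, false) ∪ K ε ∪ S (ε, true), fun ε ↦ ⟨?_, ?_⟩, fun ε ε' hne ↦ ?_⟩
  · refine ((hS _).1.trans (hK ε) (hSK _ ε)).trans (hS (ε, true)).1.symm ?_
    rw [union_inter_distrib_right, union_subset_iff, inter_comm (K ε)]
    refine ⟨(hSpair (by simp)).trans ?_, hSK _ ε⟩
    simp [(hv ε).symm]
  · have hSU : ∀ b, S (ε, b) ⊆ K ε ∪ ⋃ b, U (v ε b) := fun b ↦ (hS (ε, b)).2.trans <|
      insert_subset (Or.inl (hxK ε b))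
        ((subset_iUnion (fun b ↦ U (v ε b)) b).trans subset_union_right)
    exact union_subset (union_subset (hSU false) subset_union_left) (hSU true)
  · have hSS : ∀ b b', S (ε, b) ∩ S (ε', b') ⊆ a '' (range (v ε) ∩ range (v ε')) := fun b b' ↦
      (hSpair (fun h ↦ hne (congrArg Prod.fst h))).trans <| image_mono <| inter_subset_inter
        (singleton_subset_iff.2 ⟨b, rfl⟩) (singleton_subset_iff.2 ⟨b', rfl⟩)
    rintro z ⟨(hz | hz) | hz, (hz' | hz') | hz'⟩
    · exact hSS _ _ ⟨hz, hz'⟩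
    · exact (disjoint_left.1 (hSK' _ _ hne) hz hz').elim
    · exact hSS _ _ ⟨hz, hz'⟩
    · exact (disjoint_left.1 (hSK' _ _ hne.symm) hz' hz).elim
    · exact (disjoint_left.1 (hKd hne) hz hz').elim
    · exact (disjoint_left.1 (hSK' _ _ hne.symm) hz' hz).elim
    · exact hSS _ _ ⟨hz, hz'⟩
    · exact (disjoint_left.1 (hSK' _ _ hne) hz hz').elim
    · exact hSS _ _ ⟨hz, hz'⟩

end Joining

section Gap

variable {α W : Type*} [LinearOrder α]

/-- `IsGap F p q s t`: between the time `s`, at which `F p` is visited, and the later time `t`, at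
which `F q` is visited, no member of the family `F` is visited. -/
structure IsGap (F : W → Set α) (p q : W) (s t : α) : Prop where
  lt : s < t
  left_mem : s ∈ F p
  right_mem : t ∈ F q
  disjoint_Ioo : ∀ w, Disjoint (Ioo s t) (F w)

/-- The graph joining two members of a family of sets of times if a gap of the family lies between
them. -/
def gapGraph (F : W → Set α) : SimpleGraph W :=
  SimpleGraph.fromRel fun p q ↦ ∃ s t, IsGap F p q s t

variable {F : W → Set α} {p q p' q' : W} {s t s' t' : α}

theorem IsGap.eq_or_abut (h : IsGap F p q s t) (h' : IsGap F p' q' s' t')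
    (hmeet : (Icc s t ∩ Icc s' t').Nonempty) : s = s' ∧ t = t' ∨ t = s' ∨ t' = s := by
  obtain ⟨r, hr, hr'⟩ := hmeet
  have hs : s ∉ Ioo s' t' := fun hs ↦ disjoint_left.1 (h'.disjoint_Ioo p) hs h.left_mem
  have ht : t ∉ Ioo s' t' := fun ht ↦ disjoint_left.1 (h'.disjoint_Ioo q) ht h.right_mem
  have hs' : s' ∉ Ioo s t := fun hs ↦ disjoint_left.1 (h.disjoint_Ioo p') hs h'.left_mem
  have ht' : t' ∉ Ioo s t := fun ht ↦ disjoint_left.1 (h.disjoint_Ioo q') ht h'.right_mem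
  have := h.lt
  have := h'.lt
  grind

theorem exists_isGap_of_mem_edgeSet_gapGraph {e : Sym2 W} (he : e ∈ (gapGraph F).edgeSet) :
    ∃ (v : Bool → W) (θ : Bool → α), v false ≠ v true ∧ e = s(v false, v true) ∧
      IsGap F (v false) (v true) (θ false) (θ true) := by
  induction e with | h p q
  obtain ⟨hpq, ⟨s, t, h⟩ | ⟨s, t, h⟩⟩ := he
  · exact ⟨fun b ↦ bif b then q else p, fun b ↦ bif b then t else s, hpq, rfl, h⟩
  · exact ⟨fun b ↦ bif b then p else q, fun b ↦ bif b then t else s, hpq.symm, Sym2.eq_swap, h⟩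

theorem nonempty_of_mem_edgeSet_gapGraph {e : Sym2 W} (he : e ∈ (gapGraph F).edgeSet) {w : W}
    (hw : w ∈ e) : (F w).Nonempty := by
  obtain ⟨v, θ, -, rfl, h⟩ := exists_isGap_of_mem_edgeSet_gapGraph he
  rcases Sym2.mem_iff.1 hw with rfl | rfl
  exacts [⟨_, h.left_mem⟩, ⟨_, h.right_mem⟩]

variable [TopologicalSpace α] [OrderClosedTopology α] [Finite W]

theorem exists_isGap_of_lt (hF : ∀ w, IsCompact (F w)) (hd : Pairwise (Function.onFun Disjoint F))
    {S : Set W} (hp : p ∈ S) (hq : q ∉ S) (hs : s ∈ F p) (ht : t ∈ F q) (hst : s < t) :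
    ∃ p' ∈ S, ∃ q' ∉ S, ∃ s' t', IsGap F p' q' s' t' := by
  have hcompact : ∀ S : Set W, IsCompact (⋃ w ∈ S, F w) := fun S ↦
    S.toFinite.isCompact_biUnion fun w _ ↦ hF w
  obtain ⟨t', ⟨htB, hst'⟩, htmin⟩ := ((hcompact Sᶜ).inter_right isClosed_Ici).exists_isLeast
    ⟨t, mem_biUnion hq ht, hst.le⟩
  obtain ⟨s', ⟨hsA, hs't'⟩, hsmax⟩ := ((hcompact S).inter_right isClosed_Iic).exists_isGreatest
    ⟨s, mem_biUnion hp hs, hst'⟩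
  obtain ⟨p', hp', hs'⟩ := mem_iUnion₂.1 hsA
  obtain ⟨q', hq', ht'⟩ := mem_iUnion₂.1 htB
  have hss' : s ≤ s' := hsmax ⟨mem_biUnion hp hs, hst'⟩
  have hne : s' ≠ t' := by
    rintro rfl
    exact disjoint_left.1 (hd (ne_of_mem_of_not_mem hp' hq')) hs' ht'
  refine ⟨p', hp', q', hq', s', t', hs't'.lt_of_ne hne, hs', ht', fun w ↦
    disjoint_left.2 fun r hr hrw ↦ ?_⟩
  by_cases hw : w ∈ S
  · exact (hsmax ⟨mem_biUnion hw hrw, hr.2.le⟩).not_gt hr.1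
  · exact (htmin ⟨mem_biUnion hw hrw, hss'.trans hr.1.le⟩).not_gt hr.2

theorem exists_gapGraph_adj (hF : ∀ w, IsCompact (F w))
    (hd : Pairwise (Function.onFun Disjoint F)) {S : Set W} (hp : p ∈ S) (hq : q ∉ S)
    (hFp : (F p).Nonempty) (hFq : (F q).Nonempty) :
    ∃ p' ∈ S, ∃ q' ∉ S, (gapGraph F).Adj p' q' := by
  obtain ⟨s, hs⟩ := hFp
  obtain ⟨t, ht⟩ := hFq
  rcases lt_trichotomy s t with hst | rfl | hts
  · obtain ⟨p', hp', q', hq', hgap⟩ := exists_isGap_of_lt hF hd hp hq hs ht hst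
    exact ⟨p', hp', q', hq', ne_of_mem_of_not_mem hp' hq', Or.inl hgap⟩
  · exact (disjoint_left.1 (hd (ne_of_mem_of_not_mem hp hq)) hs ht).elim
  · obtain ⟨q', hq', p', hp', hgap⟩ :=
      exists_isGap_of_lt hF hd (S := Sᶜ) hq (not_not.2 hp) ht hs hts
    exact ⟨p', not_not.1 hp', q', hq', ne_of_mem_of_not_mem (not_not.1 hp') hq', Or.inr hgap⟩

theorem preconnected_induce_gapGraph (hF : ∀ w, IsCompact (F w))
    (hd : Pairwise (Function.onFun Disjoint F)) :
    ((gapGraph F).induce {w | (F w).Nonempty}).Preconnected := by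
  intro p q
  by_contra hpq
  obtain ⟨p', ⟨hp', hreach⟩, q', hq', hadj⟩ := exists_gapGraph_adj hF hd
    (S := {w | ∃ hw, ((gapGraph F).induce {w | (F w).Nonempty}).Reachable p ⟨w, hw⟩})
    ⟨p.2, .refl p⟩ (fun ⟨_, h⟩ ↦ hpq h) p.2 q.2
  have hFq' : (F q').Nonempty := by
    obtain ⟨-, ⟨s, t, h⟩ | ⟨s, t, h⟩⟩ := hadj
    exacts [⟨t, h.right_mem⟩, ⟨s, h.left_mem⟩]
  refine hq' ⟨hFq', hreach.trans (SimpleGraph.Adj.reachable ?_)⟩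
  exact hadj

theorem exists_le_gapGraph_isTree (hF : ∀ w, IsCompact (F w))
    (hd : Pairwise (Function.onFun Disjoint F)) :
    ∃ T ≤ gapGraph F, {w | (F w).Nonempty}.Nonempty →
      (T.induce {w | (F w).Nonempty}).IsTree := by
  by_cases hne : {w | (F w).Nonempty}.Nonempty
  · have := hne.to_subtype
    obtain ⟨T, hle, hT⟩ := (SimpleGraph.Connected.mk
      (preconnected_induce_gapGraph hF hd)).exists_isTree_le
    refine ⟨T.map (Function.Embedding.subtype _), (SimpleGraph.map_le_iff_le_comap _ _ _).2 hle,
      fun _ ↦ ?_⟩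
    rwa [SimpleGraph.induce, SimpleGraph.comap_map_eq]
  · exact ⟨⊥, bot_le, fun h ↦ (hne h).elim⟩

end Gap

theorem countable_image_isLocalMin {X α : Type*} [TopologicalSpace X]
    [SecondCountableTopology X] [PartialOrder α] (f : X → α) :
    (f '' {x | IsLocalMin f x}).Countable := by
  have hbasis := TopologicalSpace.isBasis_countableBasis X
  refine ((TopologicalSpace.countable_countableBasis X).biUnion
    fun B _ ↦ (?_ : {y | IsLeast (f '' B) y}.Countable)).mono ?_
  · exact Set.Subsingleton.countable fun y hy z hz ↦ hy.unique hz
  · rintro _ ⟨x, hx, rfl⟩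
    obtain ⟨B, hB, hxB, hBsub⟩ := hbasis.mem_nhds_iff.1 hx
    exact mem_biUnion hB ⟨⟨x, hxB, rfl⟩, forall_mem_image.2 hBsub⟩

section Thickening

open Metric

theorem mem_cthickening_iff_infDist_le {X : Type*} [PseudoMetricSpace X] {C : Set X}
    (hC : C.Nonempty) {ρ : ℝ} (hρ : 0 ≤ ρ) {x : X} : x ∈ cthickening ρ C ↔ infDist x C ≤ ρ := by
  rw [mem_cthickening_iff, infDist, ENNReal.le_ofReal_iff_toReal_le (infEDist_ne_top hC) hρ]

theorem eventually_disjoint_cthickening {X : Type*} [PseudoEMetricSpace X] {C D : Set X}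
    (hC : IsCompact C) (hD : IsClosed D) (h : Disjoint C D) :
    ∀ᶠ ρ in 𝓝 (0 : ℝ), Disjoint (cthickening ρ C) (cthickening ρ D) := by
  obtain ⟨δ, hδ, hdisj⟩ := h.exists_cthickenings hC hD
  filter_upwards [Iio_mem_nhds hδ] with ρ hρ
  exact hdisj.mono (cthickening_mono hρ.le C) (cthickening_mono hρ.le D)

theorem eventually_cthickening_subset {X : Type*} [PseudoEMetricSpace X] {C O : Set X}
    (hC : IsCompact C) (hO : IsOpen O) (h : C ⊆ O) :
    ∀ᶠ ρ in 𝓝 (0 : ℝ), cthickening ρ C ⊆ O := by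
  obtain ⟨δ, hδ, hsub⟩ := hC.exists_cthickening_subset_open hO h
  filter_upwards [Iio_mem_nhds hδ] with ρ hρ
  exact (cthickening_mono hρ.le C).trans hsub

variable {E : Type*} [NormedAddCommGroup E] [NormedSpace ℝ E]

theorem isPreconnected_thickening {C : Set E} (hC : IsPreconnected C) (ρ : ℝ) :
    IsPreconnected (thickening ρ C) := by
  rw [← add_ball_zero, ← add_image_prod]
  exact (hC.prod isPreconnected_ball).image _ continuous_add.continuousOn

theorem isAccessible_thickening {C : Set E} (hC : IsCompact C) {ρ : ℝ} (hρ : 0 < ρ) {x : E}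
    (hx : x ∈ cthickening ρ C) (hx' : x ∉ thickening ρ C) : IsAccessible (thickening ρ C) x := by
  rw [hC.cthickening_eq_biUnion_closedBall hρ.le] at hx
  obtain ⟨c, hc, hxc⟩ := mem_iUnion₂.1 hx
  refine ⟨hx', c, Subset.trans ?_ (ball_subset_thickening hc ρ)⟩
  have hint : interior (ball c ρ) = ball c ρ := isOpen_ball.interior_eq
  simpa only [hint] using (convex_ball c ρ).openSegment_closure_interior_subset_interior
    ((closure_ball c hρ.ne').symm ▸ hxc) (hint.symm ▸ mem_ball_self hρ)

theorem exists_isCompact_isPreconnected_between [CompleteSpace E] {Q K : Set E} (hQ : IsOpen Q)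
    (hQc : IsPathConnected Q) (hK : IsCompact K) (hKQ : K ⊆ Q) {a : E} (ha : a ∈ Q) :
    ∃ C, IsCompact C ∧ IsPreconnected C ∧ a ∈ C ∧ C ⊆ Q ∧ K ⊆ C := by
  suffices ∃ C, IsCompact C ∧ IsPreconnected C ∧ a ∈ C ∧ C ⊆ Q ∧ K ∩ K ⊆ C by
    rwa [inter_self] at this
  refine hK.induction_on
    (p := fun s ↦ ∃ C, IsCompact C ∧ IsPreconnected C ∧ a ∈ C ∧ C ⊆ Q ∧ s ∩ K ⊆ C) ?_ ?_ ?_ ?_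
  · exact ⟨{a}, isCompact_singleton, isPreconnected_singleton, rfl, singleton_subset_iff.2 ha,
      by simp⟩
  · rintro s t hst ⟨C, hC, hCc, haC, hCQ, htC⟩
    exact ⟨C, hC, hCc, haC, hCQ, (inter_subset_inter_left K hst).trans htC⟩
  · rintro s t ⟨C, hC, hCc, haC, hCQ, hsC⟩ ⟨D, hD, hDc, haD, hDQ, htD⟩
    exact ⟨C ∪ D, hC.union hD, hCc.union a haC haD hDc, Or.inl haC, union_subset hCQ hDQ,
      union_inter_distrib_right s t K ▸ union_subset_union hsC htD⟩
  · intro x hx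
    obtain ⟨r, hr, hball⟩ := nhds_basis_closedBall.mem_iff.1 (hQ.mem_nhds (hKQ hx))
    obtain ⟨γ, hγ⟩ := hQc.joinedIn a ha x (hKQ hx)
    let D := closure (convexHull ℝ (closedBall x r ∩ K))
    have hD : IsCompact D := (totallyBounded_convexHull.2 (hK.inter_left
      isClosed_closedBall).totallyBounded).closure.isCompact_of_isClosed isClosed_closure
    have hsubD : closedBall x r ∩ K ⊆ D := (subset_convexHull ℝ _).trans subset_closure
    have hDball : D ⊆ closedBall x r := closure_minimal
      (convexHull_min inter_subset_left (convex_closedBall x r)) isClosed_closedBall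
    refine ⟨closedBall x r, mem_nhdsWithin_of_mem_nhds (closedBall_mem_nhds x hr), range γ ∪ D,
      (isCompact_range γ.continuous).union hD,
      (isPreconnected_range γ.continuous).union x ⟨1, γ.target⟩
        (hsubD ⟨mem_closedBall_self hr.le, hx⟩) (convex_convexHull ℝ _).closure.isPreconnected,
      Or.inl ⟨0, γ.source⟩, union_subset (range_subset_iff.2 hγ) (hDball.trans hball),
      hsubD.trans subset_union_right⟩

end Thickening

section Visits

open Metric

variable {X W : Type*} [PseudoMetricSpace X]

/-- The times in `[0, 1]` at which the curve `g` is in the closed `ρ`-thickening of `C w`. -/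
def visits (g : ℝ → X) (C : W → Set X) (ρ : ℝ) (w : W) : Set ℝ :=
  Icc 0 1 ∩ g ⁻¹' cthickening ρ (C w)

/-- The radius `ρ` is generic for the curve `g` and the sets `C w` if it is not a local minimum
value of the distance from `g t` to some `C w`; `g` then never touches the boundary of a thickening
from outside. -/
def IsGenericRadius (g : ℝ → X) (C : W → Set X) (ρ : ℝ) : Prop :=
  ∀ w t, IsLocalMin (fun r ↦ infDist (g r) (C w)) t → infDist (g t) (C w) ≠ ρ

variable {g : ℝ → X} {C : W → Set X} {ρ : ℝ}

theorem isCompact_visits (hg : Continuous g) (w : W) : IsCompact (visits g C ρ w) :=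
  isCompact_Icc.inter_right (isClosed_cthickening.preimage hg)

theorem pairwise_disjoint_visits
    (hd : Pairwise (Function.onFun Disjoint fun w ↦ cthickening ρ (C w))) :
    Pairwise (Function.onFun Disjoint (visits g C ρ)) :=
  hd.mono fun _ _ h ↦ (h.preimage g).mono inter_subset_right inter_subset_right

theorem countable_setOf_not_isGenericRadius [Countable W] (g : ℝ → X) (C : W → Set X) :
    {ρ | ¬ IsGenericRadius g C ρ}.Countable := by
  refine (countable_iUnion fun w ↦
    countable_image_isLocalMin fun r ↦ infDist (g r) (C w)).mono fun ρ hρ ↦ ?_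
  simp only [IsGenericRadius, mem_ofPred_eq, not_forall, not_not] at hρ
  obtain ⟨w, t, ht, htρ⟩ := hρ
  exact mem_iUnion.2 ⟨w, t, ht, htρ⟩

namespace IsGap

variable {p q p' q' : W} {s t s' t' : ℝ}

theorem Icc_subset (h : IsGap (visits g C ρ) p q s t) : Icc s t ⊆ Icc 0 1 :=
  Icc_subset_Icc h.left_mem.1.1 h.right_mem.1.2

theorem disjoint_thickening (h : IsGap (visits g C ρ) p q s t) (hg : Continuous g) (w : W) :
    Disjoint (g '' Icc s t) (thickening ρ (C w)) := by
  rw [disjoint_image_left, ← closure_Ioo h.lt.ne]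
  refine Disjoint.closure_left (disjoint_left.2 fun r hr hrw ↦ ?_) (isOpen_thickening.preimage hg)
  exact disjoint_left.1 (h.disjoint_Ioo w) hr
    ⟨h.Icc_subset (Ioo_subset_Icc_self hr), thickening_subset_cthickening ρ _ hrw⟩

theorem le_infDist (h : IsGap (visits g C ρ) p q s t) (hg : Continuous g) {w : W}
    (hw : (C w).Nonempty) {r : ℝ} (hr : r ∈ Icc s t) : ρ ≤ infDist (g r) (C w) :=
  not_lt.1 fun hlt ↦ disjoint_left.1 (h.disjoint_thickening hg w) (mem_image_of_mem g hr)
    ((mem_thickening_iff_infDist_lt hw).2 hlt)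

theorem not_abut (h : IsGap (visits g C ρ) p q s t) (h' : IsGap (visits g C ρ) p' q' s' t')
    (hg : Continuous g) (hC : ∀ w, (C w).Nonempty) (hρ : 0 ≤ ρ) (hgen : IsGenericRadius g C ρ) :
    t ≠ s' := by
  rintro rfl
  have hle : infDist (g t) (C q) ≤ ρ :=
    (mem_cthickening_iff_infDist_le (hC q) hρ).1 h.right_mem.2
  refine hgen q t ?_ (hle.antisymm (h.le_infDist hg (hC q) (right_mem_Icc.2 h.lt.le)))
  filter_upwards [Icc_mem_nhds h.lt h'.lt] with r hr
  refine hle.trans ((le_total r t).elim (fun hrt ↦ ?_) fun htr ↦ ?_)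
  · exact h.le_infDist hg (hC q) ⟨hr.1, hrt⟩
  · exact h'.le_infDist hg (hC q) ⟨htr, hr.2⟩

theorem eq_of_meet (h : IsGap (visits g C ρ) p q s t) (h' : IsGap (visits g C ρ) p' q' s' t')
    (hg : Continuous g) (hC : ∀ w, (C w).Nonempty) (hρ : 0 ≤ ρ) (hgen : IsGenericRadius g C ρ)
    (hd : Pairwise (Function.onFun Disjoint fun w ↦ cthickening ρ (C w)))
    (hmeet : (Icc s t ∩ Icc s' t').Nonempty) : p = p' ∧ q = q' := by
  obtain ⟨rfl, rfl⟩ : s = s' ∧ t = t' := by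
    simpa only [h.not_abut h' hg hC hρ hgen, h'.not_abut h hg hC hρ hgen, or_false] using
      h.eq_or_abut h' hmeet
  have hvisits := pairwise_disjoint_visits (g := g) hd
  exact ⟨hvisits.eq (not_disjoint_iff.2 ⟨s, h.left_mem, h'.left_mem⟩),
    hvisits.eq (not_disjoint_iff.2 ⟨t, h.right_mem, h'.right_mem⟩)⟩

end IsGap

variable {I : Type*}

/-- A family of injective curves `g i`, together with compact connected cores `C w` around the
points `a w` whose `ρ`-thickenings are disjoint and contain all crossings of different curves. -/
structure IsCoreSystem (g : I → ℝ → X) (a : W → X) (C : W → Set X) (ρ : ℝ) : Prop where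
  continuous : ∀ i, Continuous (g i)
  injective : ∀ i, Function.Injective (g i)
  isCompact : ∀ w, IsCompact (C w)
  isPreconnected : ∀ w, IsPreconnected (C w)
  mem : ∀ w, a w ∈ C w
  pos : 0 < ρ
  disjoint : Pairwise (Function.onFun Disjoint fun w ↦ cthickening ρ (C w))
  crossing : Pairwise fun i j ↦ g i '' Icc 0 1 ∩ g j '' Icc 0 1 ⊆ ⋃ w, thickening ρ (C w)
  generic : ∀ i, IsGenericRadius (g i) C ρ

namespace IsCoreSystem

variable {E : Type*} [NormedAddCommGroup E] [NormedSpace ℝ E] [CompleteSpace E]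
  {g : I → ℝ → E} {a : W → E} {C : W → Set E} {ρ : ℝ}

theorem exists_arcs_of_gaps (h : IsCoreSystem g a C ρ)
    (hE : 1 < Module.rank ℝ E) {Edge : Type*} [Finite Edge] {i : Edge → I} {v : Edge → Bool → W}
    {θ : Edge → Bool → ℝ}
    (hgap : ∀ ε, IsGap (visits (g (i ε)) C ρ) (v ε false) (v ε true) (θ ε false) (θ ε true))
    (hv : ∀ ε, v ε false ≠ v ε true) (hinj : Function.Injective fun ε ↦ (i ε, v ε)) :
    ∃ Arc : Edge → Set E, (∀ ε, IsArc (Arc ε) (a (v ε false)) (a (v ε true)) ∧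
        Arc ε ⊆ g (i ε) '' Icc (θ ε false) (θ ε true) ∪ ⋃ b, thickening ρ (C (v ε b))) ∧
      Pairwise fun ε ε' ↦ Arc ε ∩ Arc ε' ⊆ a '' (range (v ε) ∩ range (v ε')) := by
  have hoff : ∀ ε w, Disjoint (g (i ε) '' Icc (θ ε false) (θ ε true)) (thickening ρ (C w)) :=
    fun ε ↦ (hgap ε).disjoint_thickening (h.continuous _)
  have hend : ∀ ε b, θ ε b ∈ Icc (θ ε false) (θ ε true) ∧
      g (i ε) (θ ε b) ∈ cthickening ρ (C (v ε b)) := fun ε b ↦ b.rec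
    ⟨left_mem_Icc.2 (hgap ε).lt.le, (hgap ε).left_mem.2⟩
    ⟨right_mem_Icc.2 (hgap ε).lt.le, (hgap ε).right_mem.2⟩
  refine exists_arcs_of_cores hE (fun w ↦ isOpen_thickening)
    (fun w ↦ isPreconnected_thickening (h.isPreconnected w) ρ) (h.disjoint.mono fun _ _ hww' ↦
      hww'.mono (thickening_subset_cthickening ρ _) (thickening_subset_cthickening ρ _))
    (fun w ↦ self_subset_thickening h.pos _ (h.mem w)) (x := fun ε b ↦ g (i ε) (θ ε b))
    (fun ε ↦ isArc_image_Icc (h.continuous _).continuousOn (hgap ε).lt (h.injective _).injOn)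
    ?_ hoff hv fun ε b ↦ isAccessible_thickening (h.isCompact _) h.pos (hend ε b).2
      (disjoint_left.1 (hoff ε _) (mem_image_of_mem _ (hend ε b).1))
  refine fun ε ε' hne ↦ disjoint_left.2 fun z hz hz' ↦ hne (hinj ?_)
  have hi : i ε = i ε' := by
    by_contra hi
    obtain ⟨w, hw⟩ := mem_iUnion.1 (h.crossing hi ⟨image_mono (hgap ε).Icc_subset hz,
      image_mono (hgap ε').Icc_subset hz'⟩)
    exact disjoint_left.1 (hoff ε w) hz hw
  have hgap' := hgap ε'
  obtain ⟨t, ht, rfl⟩ := hz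
  obtain ⟨t', ht', htt'⟩ := hz'
  rw [← hi] at hgap' htt'
  obtain rfl := h.injective _ htt'
  obtain ⟨hfalse, htrue⟩ := (hgap ε).eq_of_meet hgap' (h.continuous _)
    (fun w ↦ ⟨a w, h.mem w⟩) h.pos.le (h.generic _) h.disjoint ⟨t', ht, ht'⟩
  exact Prod.ext hi (funext fun b ↦ b.rec hfalse htrue)

end IsCoreSystem

end Visits

section TreeDrawing

open Metric

/-- The graphs `T i` on the points `a w` are drawn without crossings, `T i` inside `O i`, and `T i`
restricted to the points that lie in `O i` is a tree. The set `arc i e` is the drawing of the edge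
`e` of `T i` and has no meaning for other `e`. -/
structure IsTreeDrawing {X W I : Type*} [TopologicalSpace X] (a : W → X) (O : I → Set X)
    (T : I → SimpleGraph W) (arc : I → Sym2 W → Set X) : Prop where
  isTree : ∀ i, (a ⁻¹' O i).Nonempty → ((T i).induce (a ⁻¹' O i)).IsTree
  isArc : ∀ i p q, (T i).Adj p q → IsArc (arc i s(p, q)) (a p) (a q)
  arc_subset : ∀ i, ∀ e ∈ (T i).edgeSet, arc i e ⊆ O i
  mem_of_mem_arc : ∀ i, ∀ e ∈ (T i).edgeSet, ∀ w, a w ∈ arc i e → w ∈ e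
  inter_subset : ∀ i j, ∀ e ∈ (T i).edgeSet, ∀ e' ∈ (T j).edgeSet, (i, e) ≠ (j, e') →
    arc i e ∩ arc j e' ⊆ a '' {w | w ∈ e ∧ w ∈ e'}

variable {W I : Type*}

namespace IsTreeDrawing

variable {X : Type*} [TopologicalSpace X] {a : W → X} {O : I → Set X}

theorem mem_of_adj {T : I → SimpleGraph W} {arc : I → Sym2 W → Set X} (h : IsTreeDrawing a O T arc)
    {i : I} {p q : W} (hpq : (T i).Adj p q) : a p ∈ O i :=
  h.arc_subset i s(p, q) hpq (h.isArc i p q hpq).left_mem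

theorem exists_extend {P : I → Prop} {T : {i // P i} → SimpleGraph W}
    {arc : {i // P i} → Sym2 W → Set X} (h : IsTreeDrawing a (fun i : {i // P i} ↦ O i) T arc)
    (hP : ∀ i, ¬ P i → (a ⁻¹' O i).Subsingleton) :
    ∃ T arc, IsTreeDrawing a O T arc := by
  let T' : I → SimpleGraph W := Function.extend Subtype.val T ⊥
  let arc' : I → Sym2 W → Set X := Function.extend Subtype.val arc ⊥
  have hT : ∀ i : {i // P i}, T' i = T i := Subtype.val_injective.extend_apply T ⊥
  have harc : ∀ i : {i // P i}, arc' i = arc i := Subtype.val_injective.extend_apply arc ⊥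
  have hbot : ∀ i, ¬ P i → T' i = ⊥ := fun i hi ↦
    Function.extend_apply' T ⊥ i (fun ⟨j, hj⟩ ↦ hi (hj ▸ j.2))
  have hedge : ∀ i, ∀ e ∈ (T' i).edgeSet, P i := fun i e he ↦ by
    by_contra hi
    simp [hbot i hi] at he
  refine ⟨T', arc', fun i hne ↦ ?_, fun i p q hpq ↦ ?_, fun i e he ↦ ?_, fun i e he ↦ ?_,
    fun i j e he e' he' ↦ ?_⟩
  · by_cases hi : P i
    · exact (hT ⟨i, hi⟩).symm ▸ h.isTree ⟨i, hi⟩ hne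
    · have := hne.to_subtype
      have := (hP i hi).coe_sort
      exact SimpleGraph.IsTree.of_subsingleton
  · lift i to {i // P i} using hedge i s(p, q) hpq
    rw [harc]
    exact h.isArc i p q (hT i ▸ hpq)
  · lift i to {i // P i} using hedge i e he
    rw [harc]
    exact h.arc_subset i e (hT i ▸ he)
  · lift i to {i // P i} using hedge i e he
    rw [harc]
    exact h.mem_of_mem_arc i e (hT i ▸ he)
  · lift i to {i // P i} using hedge i e he
    lift j to {i // P i} using hedge j e' he'
    rw [harc, harc]
    exact fun hne ↦ h.inter_subset i j e (hT i ▸ he) e' (hT j ▸ he')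
      (by simpa [Subtype.ext_iff] using hne)

end IsTreeDrawing

theorem isCompact_inter_of_subset_biUnion {X ι : Type*} [TopologicalSpace X] {K : Set X}
    (hK : IsCompact K) {Q : ι → Set X} (hQd : Pairwise (Function.onFun Disjoint Q))
    (hKQ : K ⊆ ⋃ i ∈ {i | IsOpen (Q i)}, Q i) (i : ι) : IsCompact (K ∩ Q i) := by
  have hopen : IsOpen (⋃ j ∈ {j | IsOpen (Q j) ∧ j ≠ i}, Q j) := isOpen_biUnion fun j hj ↦ hj.1
  convert hK.diff hopen using 1
  ext x
  simp only [mem_inter_iff, Set.mem_sdiff, mem_iUnion, mem_ofPred_eq, exists_prop, not_exists,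
    not_and, and_imp, and_congr_right_iff]
  refine fun hx ↦ ⟨fun hxi j _ hji hxj ↦ disjoint_left.1 (hQd hji) hxj hxi, fun hxi ↦ ?_⟩
  obtain ⟨j, hj, hxj⟩ := mem_iUnion₂.1 (hKQ hx)
  exact by_contra fun hxi' ↦ hxi j hj (fun hji ↦ hxi' (hji ▸ hxj)) hxj

theorem exists_pos_notMem_of_eventually {p : ℝ → Prop} (hp : ∀ᶠ ρ in 𝓝 0, p ρ) {B : Set ℝ}
    (hB : B.Countable) : ∃ ρ > 0, p ρ ∧ ρ ∉ B := by
  obtain ⟨δ, hδ, hsub⟩ := mem_nhdsGT_iff_exists_Ioo_subset.1 (hp.filter_mono nhdsWithin_le_nhds)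
  obtain ⟨ρ, hρ, hρB⟩ := (hB.dense_compl ℝ).inter_open_nonempty _ isOpen_Ioo (nonempty_Ioo.2 hδ)
  exact ⟨ρ, hρ.1, hsub hρ, hρB⟩

theorem exists_generic_radius [Finite W] [Finite I] {X : Type*} [MetricSpace X] {g : I → ℝ → X}
    (hg : ∀ i, Continuous (g i)) {C : W → Set X} (hC : ∀ w, IsCompact (C w))
    (hCd : Pairwise (Function.onFun Disjoint C)) {O : I → Set X} (hO : ∀ i, IsOpen (O i))
    (hCO : ∀ i w, C w ⊆ O i ∨ Disjoint (C w) (g i '' Icc 0 1)) :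
    ∃ ρ > 0, Pairwise (Function.onFun Disjoint fun w ↦ cthickening ρ (C w)) ∧
      (∀ i w, cthickening ρ (C w) ⊆ O i ∨ Disjoint (cthickening ρ (C w)) (g i '' Icc 0 1)) ∧
      ∀ i, IsGenericRadius (g i) C ρ := by
  have hdisjoint : ∀ᶠ ρ in 𝓝 0, ∀ w w', w ≠ w' →
      Disjoint (cthickening ρ (C w)) (cthickening ρ (C w')) :=
    eventually_all.2 fun w ↦ eventually_all.2 fun w' ↦ eventually_imp_distrib_left.2 fun hne ↦
      eventually_disjoint_cthickening (hC w) (hC w').isClosed (hCd hne)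
  have hsub : ∀ᶠ ρ in 𝓝 0, ∀ i w,
      cthickening ρ (C w) ⊆ O i ∨ Disjoint (cthickening ρ (C w)) (g i '' Icc 0 1) := by
    refine eventually_all.2 fun i ↦ eventually_all.2 fun w ↦ ?_
    rcases hCO i w with h | h
    · exact (eventually_cthickening_subset (hC w) (hO i) h).mono fun _ ↦ Or.inl
    · exact (eventually_disjoint_cthickening (hC w)
        (isCompact_Icc.image (hg i)).isClosed h).mono fun ρ hρ ↦
          Or.inr (hρ.mono_right (self_subset_cthickening _))
  obtain ⟨ρ, hpos, ⟨hd, hs⟩, hgen⟩ := exists_pos_notMem_of_eventually (hdisjoint.and hsub)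
    (countable_iUnion fun i ↦ countable_setOf_not_isGenericRadius (g i) C)
  exact ⟨ρ, hpos, fun w w' ↦ hd w w', hs,
    fun i ↦ not_not.1 fun h ↦ hgen (mem_iUnion.2 ⟨i, h⟩)⟩

variable {E : Type*} [NormedAddCommGroup E] [NormedSpace ℝ E] [CompleteSpace E]

theorem IsCoreSystem.exists_arcs_of_le_gapGraph [Finite W] [Finite I] {g : I → ℝ → E} {a : W → E}
    {C : W → Set E} {ρ : ℝ} (h : IsCoreSystem g a C ρ) (hE : 1 < Module.rank ℝ E)
    {T : I → SimpleGraph W} (hT : ∀ i, T i ≤ gapGraph (visits (g i) C ρ)) :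
    ∃ arc : I → Sym2 W → Set E,
      (∀ i p q, (T i).Adj p q → IsArc (arc i s(p, q)) (a p) (a q)) ∧
      (∀ i, ∀ e ∈ (T i).edgeSet, arc i e ⊆
        (g i '' Icc 0 1 \ ⋃ w, thickening ρ (C w)) ∪ ⋃ w ∈ {w | w ∈ e}, thickening ρ (C w)) ∧
      ∀ i j, ∀ e ∈ (T i).edgeSet, ∀ e' ∈ (T j).edgeSet, (i, e) ≠ (j, e') →
        arc i e ∩ arc j e' ⊆ a '' {w | w ∈ e ∧ w ∈ e'} := by
  choose v θ hv he hgap using fun ε : {ε : I × Sym2 W // ε.2 ∈ (T ε.1).edgeSet} ↦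
    exists_isGap_of_mem_edgeSet_gapGraph (SimpleGraph.edgeSet_mono (hT ε.1.1) ε.2)
  have hinj : Function.Injective fun ε ↦ (ε.1.1, v ε) := fun ε ε' hεε' ↦ by
    obtain ⟨hi, hvv'⟩ := Prod.mk.inj hεε'
    exact Subtype.ext (Prod.ext hi (by rw [he ε, he ε', hvv']))
  have hmem : ∀ ε b, v ε b ∈ ε.1.2 := fun ε b ↦ by
    rw [he ε]
    exact b.rec (Sym2.mem_mk_left _ _) (Sym2.mem_mk_right _ _)
  obtain ⟨Arc, hArc, hpair⟩ := h.exists_arcs_of_gaps hE hgap hv hinj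
  let arc : I → Sym2 W → Set E := fun i e ↦ Function.extend Subtype.val Arc ⊥ (i, e)
  have harc : ∀ i e (hi : e ∈ (T i).edgeSet), arc i e = Arc ⟨(i, e), hi⟩ := fun i e hi ↦
    Subtype.val_injective.extend_apply Arc ⊥ ⟨(i, e), hi⟩
  refine ⟨arc, fun i p q hpq ↦ ?_, fun i e hi ↦ ?_, fun i j e hi e' hj hne ↦ ?_⟩
  · have hArc' := (hArc ⟨(i, s(p, q)), hpq⟩).1
    rw [harc i _ hpq]
    rcases Sym2.eq_iff.1 (he ⟨(i, s(p, q)), hpq⟩) with ⟨hp, hq⟩ | ⟨hp, hq⟩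
    · rwa [← hp, ← hq] at hArc'
    · rw [← hp, ← hq] at hArc'
      exact hArc'.symm
  · rw [harc i e hi]
    refine (hArc _).2.trans (union_subset_union (subset_sdiff.2 ⟨?_, ?_⟩) ?_)
    · exact image_mono (hgap _).Icc_subset
    · exact disjoint_iUnion_right.2 ((hgap _).disjoint_thickening (h.continuous i))
    · exact iUnion_subset fun b ↦ subset_biUnion_of_mem (u := fun w ↦ thickening ρ (C w))
        (hmem ⟨(i, e), hi⟩ b)
  · rw [harc i e hi, harc j e' hj]
    refine (hpair fun hεε' ↦ hne (congrArg Subtype.val hεε')).trans (image_mono ?_)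
    rintro _ ⟨⟨b, rfl⟩, b', hb'⟩
    exact ⟨hmem ⟨(i, e), hi⟩ b, hb' ▸ hmem ⟨(j, e'), hj⟩ b'⟩

theorem IsCoreSystem.exists_isTreeDrawing [Finite W] [Finite I] {g : I → ℝ → E} {a : W → E}
    {C : W → Set E} {ρ : ℝ} (h : IsCoreSystem g a C ρ) (hE : 1 < Module.rank ℝ E) {O : I → Set E}
    (hgO : ∀ i, MapsTo (g i) (Icc 0 1) (O i))
    (hvisits : ∀ i w, (visits (g i) C ρ w).Nonempty ↔ a w ∈ O i)
    (hCO : ∀ i w, a w ∈ O i → cthickening ρ (C w) ⊆ O i) :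
    ∃ T arc, IsTreeDrawing a O T arc := by
  choose T hT htree using fun i ↦ exists_le_gapGraph_isTree
    (fun w ↦ isCompact_visits (h.continuous i) w) (pairwise_disjoint_visits h.disjoint)
  obtain ⟨arc, harc, hsub, hinter⟩ := h.exists_arcs_of_le_gapGraph hE hT
  refine ⟨T, arc, fun i ↦ ?_, harc, fun i e he ↦ ?_, fun i e he w hw ↦ ?_, hinter⟩
  · have hV : {w | (visits (g i) C ρ w).Nonempty} = a ⁻¹' O i := Set.ext (hvisits i)
    exact hV ▸ htree i
  · refine (hsub i e he).trans (union_subset ?_ (iUnion₂_subset fun w hw ↦ ?_))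
    · exact sdiff_subset.trans (hgO i).image_subset
    · exact (thickening_subset_cthickening ρ _).trans (hCO i w ((hvisits i w).1
        (nonempty_of_mem_edgeSet_gapGraph (SimpleGraph.edgeSet_mono (hT i) he) hw)))
  · have haw : a w ∈ thickening ρ (C w) := self_subset_thickening h.pos _ (h.mem w)
    rcases hsub i e he hw with hw | hw
    · exact (hw.2 (mem_iUnion.2 ⟨w, haw⟩)).elim
    · obtain ⟨w', hw', haw'⟩ := mem_iUnion₂.1 hw
      rwa [h.disjoint.eq (not_disjoint_iff.2 ⟨a w, thickening_subset_cthickening ρ _ haw,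
        thickening_subset_cthickening ρ _ haw'⟩)]

theorem exists_cores_of_subset_biUnion {K : Set E} (hK : IsCompact K) {Q : W → Set E}
    (hQc : ∀ w, IsPathConnected (Q w)) (hQd : Pairwise (Function.onFun Disjoint Q))
    (hKQ : K ⊆ ⋃ w ∈ {w | IsOpen (Q w)}, Q w) {a : W → E} (ha : ∀ w, a w ∈ Q w) :
    ∃ C : W → Set E, (∀ w, IsCompact (C w) ∧ IsPreconnected (C w) ∧ a w ∈ C w ∧ C w ⊆ Q w) ∧
      K ⊆ ⋃ w, C w := by
  have hcore : ∀ w, ∃ C, (IsCompact C ∧ IsPreconnected C ∧ a w ∈ C ∧ C ⊆ Q w) ∧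
      (IsOpen (Q w) → K ∩ Q w ⊆ C) := fun w ↦ by
    by_cases hQ : IsOpen (Q w)
    · obtain ⟨C, hC, hCc, haC, hCQ, hKC⟩ := exists_isCompact_isPreconnected_between hQ (hQc w)
        (isCompact_inter_of_subset_biUnion hK hQd hKQ w) inter_subset_right (ha w)
      exact ⟨C, ⟨hC, hCc, haC, hCQ⟩, fun _ ↦ hKC⟩
    · exact ⟨{a w}, ⟨isCompact_singleton, isPreconnected_singleton, mem_singleton _,
        singleton_subset_iff.2 (ha w)⟩, fun h ↦ (hQ h).elim⟩
  choose C hC hKC using hcore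
  refine ⟨C, hC, fun x hx ↦ ?_⟩
  obtain ⟨w, hw, hxw⟩ := mem_iUnion₂.1 (hKQ hx)
  exact mem_iUnion.2 ⟨w, hKC w hw ⟨hx, hxw⟩⟩

/-- The points `a w` lie in pairwise disjoint path-connected cells `Q w`, each of which is contained
in or disjoint from each of the open path-connected regions `O i`, and two regions overlap only in
open cells. In the application `Q w` and `O i` are the `(k + 1)`-wise and `k`-wise intersections. -/
structure IsCellSystem {X W I : Type*} [TopologicalSpace X] (a : W → X) (Q : W → Set X)
    (O : I → Set X) : Prop where
  mem : ∀ w, a w ∈ Q w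
  isPathConnected_cell : ∀ w, IsPathConnected (Q w)
  disjoint : Pairwise (Function.onFun Disjoint Q)
  isOpen : ∀ i, IsOpen (O i)
  isPathConnected : ∀ i, IsPathConnected (O i)
  subset_or_disjoint : ∀ w i, Q w ⊆ O i ∨ Disjoint (Q w) (O i)
  inter_subset : Pairwise fun i j ↦ O i ∩ O j ⊆ ⋃ w ∈ {w | IsOpen (Q w)}, Q w

namespace IsCellSystem

variable [Finite W] [Finite I] {a : W → E} {Q : W → Set E} {O : I → Set E}

theorem exists_isCoreSystem (h : IsCellSystem a Q O) {g : I → ℝ → E} (hg : ∀ i, Continuous (g i))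
    (hinj : ∀ i, Function.Injective (g i)) (hgO : ∀ i, MapsTo (g i) (Icc 0 1) (O i)) :
    ∃ C ρ, IsCoreSystem g a C ρ ∧
      ∀ i w, cthickening ρ (C w) ⊆ O i ∨ Disjoint (cthickening ρ (C w)) (g i '' Icc 0 1) := by
  let K : Set E := ⋃ (i) (j) (_ : i ≠ j), g i '' Icc 0 1 ∩ g j '' Icc 0 1
  have hK : IsCompact K := isCompact_iUnion fun i ↦ isCompact_iUnion fun j ↦ isCompact_iUnion
    fun _ ↦ (isCompact_Icc.image (hg i)).inter (isCompact_Icc.image (hg j))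
  have hKQ : K ⊆ ⋃ w ∈ {w | IsOpen (Q w)}, Q w :=
    iUnion_subset fun i ↦ iUnion_subset fun j ↦ iUnion_subset fun hij ↦
      (inter_subset_inter (hgO i).image_subset (hgO j).image_subset).trans (h.inter_subset hij)
  obtain ⟨C, hC, hKC⟩ :=
    exists_cores_of_subset_biUnion hK h.isPathConnected_cell h.disjoint hKQ h.mem
  choose hCcompact hCconn haC hCQ using hC
  obtain ⟨ρ, hpos, hd, hCO, hgen⟩ := exists_generic_radius hg hCcompact
    (fun w w' hne ↦ (h.disjoint hne).mono (hCQ w) (hCQ w')) h.isOpen fun i w ↦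
      (h.subset_or_disjoint w i).imp (hCQ w).trans
        fun hdisj ↦ hdisj.mono (hCQ w) (hgO i).image_subset
  refine ⟨C, ρ, ⟨hg, hinj, hCcompact, hCconn, haC, hpos, hd, fun i j hij x hx ↦ ?_, hgen⟩, hCO⟩
  obtain ⟨w, hw⟩ := mem_iUnion.1 (hKC (mem_iUnion.2 ⟨i, mem_iUnion₂.2 ⟨j, hij, hx⟩⟩))
  exact mem_iUnion.2 ⟨w, self_subset_thickening hpos _ hw⟩

theorem exists_isTreeDrawing (h : IsCellSystem a Q O) (hE : 1 < Module.rank ℝ E) :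
    ∃ T arc, IsTreeDrawing a O T arc := by
  choose g hg hinj hgO hthrough using fun i ↦ exists_injective_curve_through hE (h.isOpen i)
    (h.isPathConnected i).isConnected.isPreconnected (h.isPathConnected i).nonempty
    ((toFinite (a ⁻¹' O i)).image a) (image_preimage_subset a (O i))
  obtain ⟨C, ρ, hcore, hCO⟩ := h.exists_isCoreSystem hg hinj hgO
  have haC : ∀ w, a w ∈ cthickening ρ (C w) := fun w ↦ self_subset_cthickening _ (hcore.mem w)
  have hvisits : ∀ i w, (visits (g i) C ρ w).Nonempty ↔ a w ∈ O i := by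
    refine fun i w ↦ ⟨fun ⟨t, ht, htw⟩ ↦ ?_, fun haw ↦ ?_⟩
    · exact (hCO i w).elim (fun hsub ↦ hsub (haC w)) fun hdisj ↦
        (disjoint_left.1 hdisj htw (mem_image_of_mem _ ht)).elim
    · obtain ⟨t, ht, hta⟩ := hthrough i (mem_image_of_mem a haw)
      exact ⟨t, ht, mem_preimage.2 (hta ▸ haC w)⟩
  refine hcore.exists_isTreeDrawing hE hgO hvisits fun i w haw ↦ (hCO i w).resolve_right ?_
  exact not_disjoint_iff.2 ⟨a w, haC w, hthrough i (mem_image_of_mem a haw)⟩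

end IsCellSystem

end TreeDrawing

section Nerve

variable {α : Type*} {n k : ℕ} {A : Fin n → Set α} {σ τ τ' : Finset (Fin n)} {x : α}

theorem card_le_of_fNum_eq_zero (h : fNum A (k + 1) = 0) (hσ : (⋂ i ∈ σ, A i).Nonempty) :
    σ.card ≤ k + 1 := by
  by_contra! hlt
  obtain ⟨τ, hτσ, hτ⟩ := Finset.exists_subset_card_eq (Nat.succ_le_of_lt hlt)
  have hface : Nonempty (NerveTop A (k + 1)) :=
    ⟨⟨τ, hτ, hσ.mono (biInter_subset_biInter_left hτσ)⟩⟩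
  exact Nat.card_pos.ne' h

theorem card_union_le_of_fNum_eq_zero (h : fNum A (k + 1) = 0) (hσ : x ∈ ⋂ i ∈ σ, A i)
    (hτ : x ∈ ⋂ i ∈ τ, A i) : (σ ∪ τ).card ≤ k + 1 := by
  refine card_le_of_fNum_eq_zero h ⟨x, ?_⟩
  rw [Finset.set_biInter_inter]
  exact ⟨hσ, hτ⟩

theorem subset_of_mem_iInter (h : fNum A (k + 1) = 0) (hcard : σ.card = k + 1)
    (hσ : x ∈ ⋂ i ∈ σ, A i) (hτ : x ∈ ⋂ i ∈ τ, A i) : τ ⊆ σ := by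
  have hunion : σ = σ ∪ τ := Finset.eq_of_subset_of_card_le Finset.subset_union_left
    (hcard ▸ card_union_le_of_fNum_eq_zero h hσ hτ)
  exact Finset.union_eq_left.1 hunion.symm

theorem card_union_eq_of_ne (h : fNum A (k + 1) = 0) (hcard : τ.card = k) (hcard' : τ'.card = k)
    (hne : τ ≠ τ') (hτ : x ∈ ⋂ i ∈ τ, A i) (hτ' : x ∈ ⋂ i ∈ τ', A i) :
    (τ ∪ τ').card = k + 1 := by
  refine (card_union_le_of_fNum_eq_zero h hτ hτ').antisymm ?_
  by_contra! hlt
  have hsub : τ' ⊆ τ := Finset.union_eq_left.1 (Finset.eq_of_subset_of_card_le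
    Finset.subset_union_left (by omega)).symm
  exact hne (Finset.eq_of_subset_of_card_le hsub (by omega)).symm

theorem pairwise_disjoint_nerveTop (h : fNum A (k + 1) = 0) :
    Pairwise (Function.onFun Disjoint fun p : NerveTop A k ↦ ⋂ i ∈ p.1, A i) :=
  fun p q hne ↦ disjoint_left.2 fun _ hp hq ↦ hne (Subtype.ext
    ((subset_of_mem_iInter h q.2.1 hq hp).antisymm (subset_of_mem_iInter h p.2.1 hp hq)))

theorem eq_inter_of_ne {p q : Finset (Fin n)} (hp : p.card = k + 1) (hq : q.card = k + 1)
    (hpq : p ≠ q) (hτ : τ.card = k) (hτp : τ ⊆ p) (hτq : τ ⊆ q) : τ = p ∩ q := by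
  refine Finset.eq_of_subset_of_card_le (Finset.subset_inter hτp hτq) ?_
  by_contra! hlt
  have hsub : p ⊆ q := Finset.inter_eq_left.1
    (Finset.eq_of_subset_of_card_le Finset.inter_subset_left (by omega))
  exact hpq (Finset.eq_of_subset_of_card_le hsub (by omega))

/-- The region `A_τ` in which the tree of a `k`-element set `τ` is drawn. It is made empty when
`τ` does not have `k` elements, so that such sets carry no edges. -/
def region (A : Fin n → Set α) (k : ℕ) (τ : Finset (Fin n)) : Set α :=
  {x | τ.card = k ∧ x ∈ ⋂ i ∈ τ, A i}

theorem region_of_card_eq (hτ : τ.card = k) : region A k τ = ⋂ i ∈ τ, A i :=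
  Set.ext fun _ ↦ and_iff_right hτ

theorem mem_region_iff (h : fNum A (k + 1) = 0) {a : NerveTop A k → α}
    (ha : ∀ p, a p ∈ ⋂ i ∈ p.1, A i) {p : NerveTop A k} :
    a p ∈ region A k τ ↔ τ.card = k ∧ τ ⊆ p.1 :=
  and_congr_right fun _ ↦ ⟨subset_of_mem_iInter h p.2.1 (ha p),
    fun hsub ↦ biInter_subset_biInter_left hsub (ha p)⟩

variable {X : Type*} [TopologicalSpace X] {A : Fin n → Set X}

theorem isCellSystem_nerveTop (h : fNum A (k + 1) = 0)
    (hA : ∀ p : NerveTop A k, IsPathConnected (⋂ i ∈ p.1, A i)) {a : NerveTop A k → X}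
    (ha : ∀ p, a p ∈ ⋂ i ∈ p.1, A i) :
    IsCellSystem a (fun p : NerveTop A k ↦ ⋂ i ∈ p.1, A i)
      fun τ : {τ // IsOpen (region A k τ) ∧ IsPathConnected (region A k τ)} ↦ region A k τ where
  mem := ha
  isPathConnected_cell := hA
  disjoint := pairwise_disjoint_nerveTop h
  isOpen τ := τ.2.1
  isPathConnected τ := τ.2.2
  subset_or_disjoint p τ := by
    by_cases hτ : τ.1.card = k ∧ τ.1 ⊆ p.1
    · rw [region_of_card_eq hτ.1]
      exact Or.inl (biInter_subset_biInter_left hτ.2)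
    · exact Or.inr (disjoint_left.2 fun x hp hx ↦
        hτ ⟨hx.1, subset_of_mem_iInter h p.2.1 hp hx.2⟩)
  inter_subset τ τ' hne x hx := by
    have hcard := card_union_eq_of_ne h hx.1.1 hx.2.1 (Subtype.val_injective.ne hne) hx.1.2 hx.2.2
    have hinter : (⋂ i ∈ τ.1 ∪ τ'.1, A i) = region A k τ ∩ region A k τ' := by
      rw [Finset.set_biInter_inter, region_of_card_eq hx.1.1, region_of_card_eq hx.2.1]
    refine mem_iUnion₂.2 ⟨⟨τ.1 ∪ τ'.1, hcard, x, hinter.ge hx⟩, ?_, hinter.ge hx⟩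
    rw [mem_ofPred_eq, hinter]
    exact τ.2.1.inter τ'.2.1

theorem subsingleton_preimage_region (h : fNum A (k + 1) = 0) {a : NerveTop A k → X}
    (ha : ∀ p, a p ∈ ⋂ i ∈ p.1, A i)
    (hA : ∀ τ : Finset (Fin n), τ.card = k → (⋂ i ∈ τ, A i).Subsingleton ∨
      IsOpen (⋂ i ∈ τ, A i) ∧ IsPathConnected (⋂ i ∈ τ, A i))
    (hτ : ¬ (IsOpen (region A k τ) ∧ IsPathConnected (region A k τ))) :
    (a ⁻¹' region A k τ).Subsingleton := by
  have hinj : Function.Injective a := fun p q hpq ↦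
    (pairwise_disjoint_nerveTop h).eq (not_disjoint_iff.2 ⟨a p, ha p, hpq ▸ ha q⟩)
  refine Subsingleton.preimage (fun x hx y hy ↦ ?_) hinj
  rw [region_of_card_eq hx.1] at hτ
  exact (hA τ hx.1).resolve_right hτ hx.2 hy.2

theorem exists_isTreeDrawing_region {E : Type*} [NormedAddCommGroup E] [NormedSpace ℝ E]
    [CompleteSpace E] (hE : 1 < Module.rank ℝ E) {A : Fin n → Set E} (h1 : fNum A (k + 1) = 0)
    (h2 : ∀ σ : Finset (Fin n), σ.card = k ∨ σ.card = k + 1 →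
      (⋂ i ∈ σ, A i) = ∅ ∨ (∃ p, (⋂ i ∈ σ, A i) = {p}) ∨
        (IsOpen (⋂ i ∈ σ, A i) ∧ IsPathConnected (⋂ i ∈ σ, A i)))
    {a : NerveTop A k → E} (ha : ∀ p, a p ∈ ⋂ i ∈ p.1, A i) :
    ∃ T arc, IsTreeDrawing a (region A k) T arc := by
  have hfacet : ∀ p : NerveTop A k, IsPathConnected (⋂ i ∈ p.1, A i) := fun p ↦ by
    rcases h2 p.1 (Or.inr p.2.1) with h | ⟨x, h⟩ | h
    · exact absurd h p.2.2.ne_empty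
    · exact h ▸ isPathConnected_singleton x
    · exact h.2
  have hridge : ∀ τ : Finset (Fin n), τ.card = k → (⋂ i ∈ τ, A i).Subsingleton ∨
      IsOpen (⋂ i ∈ τ, A i) ∧ IsPathConnected (⋂ i ∈ τ, A i) := fun τ hτ ↦ by
    rcases h2 τ (Or.inl hτ) with h | ⟨x, h⟩ | h
    · exact Or.inl (h ▸ subsingleton_empty)
    · exact Or.inl (h ▸ subsingleton_singleton)
    · exact Or.inr h
  obtain ⟨_, _, hdrawing⟩ := (isCellSystem_nerveTop h1 hfacet ha).exists_isTreeDrawing hE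
  exact hdrawing.exists_extend fun τ ↦ subsingleton_preimage_region h1 ha hridge

end Nerve

theorem redrawing_trees_general {E : Type*} [NormedAddCommGroup E] [NormedSpace ℝ E]
    [CompleteSpace E] (hE : 1 < Module.rank ℝ E) (k n : ℕ) (A : Fin n → Set E)
    (h1 : fNum A (k + 1) = 0)
    (h2 : ∀ σ : Finset (Fin n), σ.card = k ∨ σ.card = k + 1 →
      (⋂ i ∈ σ, A i) = ∅ ∨ (∃ p, (⋂ i ∈ σ, A i) = {p}) ∨
        (IsOpen (⋂ i ∈ σ, A i) ∧ IsPathConnected (⋂ i ∈ σ, A i)))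
    (a : NerveTop A k → E) (ha : ∀ p : NerveTop A k, a p ∈ ⋂ i ∈ p.1, A i) :
    ∃ (T : Finset (Fin n) → SimpleGraph (NerveTop A k))
      (arc : Finset (Fin n) → Sym2 (NerveTop A k) → Set E),
      (∀ τ : Finset (Fin n), τ.card ≠ k → T τ = ⊥) ∧
      (∀ (τ : Finset (Fin n)) (p q : NerveTop A k), (T τ).Adj p q → τ ⊆ p.1 ∧ τ ⊆ q.1) ∧
      (∀ τ : Finset (Fin n), τ.card = k → (∃ p : NerveTop A k, τ ⊆ p.1) →
        ((T τ).induce {p : NerveTop A k | τ ⊆ p.1}).IsTree) ∧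
      (∀ (τ τ' : Finset (Fin n)) (p q : NerveTop A k),
        (T τ).Adj p q → (T τ').Adj p q → τ = τ') ∧
      (∀ (τ : Finset (Fin n)) (p q : NerveTop A k), (T τ).Adj p q →
        (∃ γ : Path (a p) (a q), Function.Injective ⇑γ ∧ Set.range ⇑γ = arc τ s(p, q)) ∧
          arc τ s(p, q) ⊆ ⋂ i ∈ τ, A i) ∧
      (∀ (τ : Finset (Fin n)), ∀ e ∈ (T τ).edgeSet, ∀ w : NerveTop A k,
        a w ∈ arc τ e → w ∈ e) ∧
      (∀ (τ τ' : Finset (Fin n)), ∀ e ∈ (T τ).edgeSet, ∀ e' ∈ (T τ').edgeSet, e ≠ e' →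
        (arc τ e \ a '' {x | x ∈ e}) ∩ (arc τ' e' \ a '' {x | x ∈ e'}) = ∅) := by
  obtain ⟨T, arc, h⟩ := exists_isTreeDrawing_region hE h1 h2 ha
  have hadj : ∀ {τ p q}, (T τ).Adj p q → τ.card = k ∧ τ ⊆ p.1 ∧ τ ⊆ q.1 := fun hpq ↦ by
    obtain ⟨hcard, hp⟩ := (mem_region_iff h1 ha).1 (h.mem_of_adj hpq)
    exact ⟨hcard, hp, ((mem_region_iff h1 ha).1 (h.mem_of_adj hpq.symm)).2⟩
  refine ⟨T, arc, fun τ hτ ↦ ?_, fun τ p q hpq ↦ (hadj hpq).2, fun τ hτ ⟨p, hp⟩ ↦ ?_,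
    fun τ τ' p q hpq hpq' ↦ ?_, fun τ p q hpq ↦ ⟨?_, ?_⟩, h.mem_of_mem_arc,
    fun τ τ' e he e' he' hne ↦ ?_⟩
  · exact SimpleGraph.eq_bot_iff_forall_not_adj.2 fun p q hpq ↦ hτ (hadj hpq).1
  · have hV : a ⁻¹' region A k τ = {p : NerveTop A k | τ ⊆ p.1} :=
      Set.ext fun q ↦ (mem_region_iff h1 ha).trans (and_iff_right hτ)
    exact hV ▸ h.isTree τ (hV ▸ ⟨p, hp⟩)
  · obtain ⟨hτ, hp, hq⟩ := hadj hpq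
    obtain ⟨hτ', hp', hq'⟩ := hadj hpq'
    have hval : p.1 ≠ q.1 := Subtype.val_injective.ne hpq.ne
    rw [eq_inter_of_ne p.2.1 q.2.1 hval hτ hp hq, eq_inter_of_ne p.2.1 q.2.1 hval hτ' hp' hq']
  · exact h.isArc τ p q hpq
  · exact (h.arc_subset τ s(p, q) hpq).trans fun x hx ↦ hx.2
  · refine eq_empty_of_forall_notMem fun x ⟨hx, hx'⟩ ↦ ?_
    obtain ⟨w, hw, rfl⟩ := h.inter_subset τ τ' e he e' he'
      (fun heq ↦ hne (congrArg Prod.snd heq)) ⟨hx.1, hx'.1⟩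
    exact hx.2 (mem_image_of_mem a hw.1)

/-- **Proposition (redrawing, b = 1).** Under the hypotheses of the main theorem
(`f_{k+1}(𝒜) = 0`; each `k`-wise and `(k+1)`-wise intersection empty, a single point,
or open and path-connected), given a choice of pairwise distinct points
`a σ ∈ A_σ` for the `(k+1)`-element faces `σ` of the nerve, one can choose for every
`k`-element `τ` with `V_τ ≠ ∅` a tree `T τ` on the vertex set `V_τ = {a σ : σ ⊃ τ}`
together with a drawing of `T τ` inside `A_τ` such that the union graph `G = ⋃_τ T τ`
on the vertex set `W` is simple (each edge lies in a unique tree) and the union of the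
drawings is a crossing-free drawing of `G` inside `⋃ 𝒜`; in particular `G` is a simple
planar graph. -/
theorem redrawing_trees (k n : ℕ) (hk : 2 ≤ k)
    (A : Fin n → Set (EuclideanSpace ℝ (Fin 2)))
    (h1 : fNum A (k + 1) = 0)
    (h2 : ∀ σ : Finset (Fin n), σ.card = k ∨ σ.card = k + 1 →
      (⋂ i ∈ σ, A i) = ∅ ∨ (∃ p, (⋂ i ∈ σ, A i) = {p}) ∨
        (IsOpen (⋂ i ∈ σ, A i) ∧ IsPathConnected (⋂ i ∈ σ, A i)))
    (a : NerveTop A k → EuclideanSpace ℝ (Fin 2))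
    (ha : ∀ p : NerveTop A k, a p ∈ ⋂ i ∈ p.1, A i)
    (hainj : Function.Injective a) :
    ∃ (T : Finset (Fin n) → SimpleGraph (NerveTop A k))
      (arc : Finset (Fin n) → Sym2 (NerveTop A k) → Set (EuclideanSpace ℝ (Fin 2))),
      -- only `k`-element sets `τ` carry a graph
      (∀ τ : Finset (Fin n), τ.card ≠ k → T τ = ⊥) ∧
      -- the edges of `T τ` join only vertices of `V_τ`
      (∀ (τ : Finset (Fin n)) (p q : NerveTop A k), (T τ).Adj p q → τ ⊆ p.1 ∧ τ ⊆ q.1) ∧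
      -- `T τ` restricted to `V_τ` is a tree (whenever `V_τ ≠ ∅`)
      (∀ τ : Finset (Fin n), τ.card = k → (∃ p : NerveTop A k, τ ⊆ p.1) →
        ((T τ).induce {p : NerveTop A k | τ ⊆ p.1}).IsTree) ∧
      -- each edge of the union graph `G` lies in exactly one of the trees,
      -- i.e. `G` is a simple graph
      (∀ (τ τ' : Finset (Fin n)) (p q : NerveTop A k),
        (T τ).Adj p q → (T τ').Adj p q → τ = τ') ∧
      -- every edge of `T τ` is drawn as an arc (image of an injective path) that lies
      -- inside `A_τ` (hence inside `⋃ 𝒜`)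
      (∀ (τ : Finset (Fin n)) (p q : NerveTop A k), (T τ).Adj p q →
        (∃ γ : Path (a p) (a q), Function.Injective ⇑γ ∧ Set.range ⇑γ = arc τ s(p, q)) ∧
          arc τ s(p, q) ⊆ ⋂ i ∈ τ, A i) ∧
      -- arcs meet the vertex points of `G` only at their own endpoints
      (∀ (τ : Finset (Fin n)), ∀ e ∈ (T τ).edgeSet, ∀ w : NerveTop A k,
        a w ∈ arc τ e → w ∈ e) ∧
      -- interiors of the arcs of distinct edges are pairwise disjoint, so the drawing
      -- of `G` is crossing-free
      (∀ (τ τ' : Finset (Fin n)), ∀ e ∈ (T τ).edgeSet, ∀ e' ∈ (T τ').edgeSet, e ≠ e' →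
        (arc τ e \ a '' {x | x ∈ e}) ∩ (arc τ' e' \ a '' {x | x ∈ e'}) = ∅) :=
  redrawing_trees_general (by rw [← Module.finrank_eq_rank]; simp) k n A h1 h2 a ha
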